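/- arXiv:1403.2852 — 10 statements merged into one kernel-verified Lean document; each statement's English description precedes it below -/
import Mathlib

section
/- Suppose g is non-decreasing. Let T>0, let x ∈ H, and let y be the bounding sequence for x. Suppose X is a weak solution of the dyadic model with initial condition x that satisfies the energy inequality on [0,t] for every t<T. Then X_n(t)² ≤ y_n for all t ∈ [0,T) and all n≥1. -/
open scoped BigOperators ENNReal
open MeasureTheory Filter Set Topology

/-- `kₙ = 2^{βn}`. -/
noncomputable def kk (β : ℝ) (n : ℕ) : ℝ := (2 : ℝ) ^ (β * n)

/-- A weak solution of the dyadic model: `X 0 ≡ 0`, `X n 0 = x n`, and the ODE holds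
for every `n ≥ 1` and `t ≥ 0` (the derivative being taken within `[0,∞)`). -/
def IsDyadicSolution (β : ℝ) (φ g : ℕ → ℝ) (x : ℕ → ℝ) (X : ℕ → ℝ → ℝ) : Prop :=
  (∀ t : ℝ, X 0 t = 0) ∧
  (∀ n : ℕ, 1 ≤ n → X n 0 = x n) ∧
  (∀ n : ℕ, 1 ≤ n → ∀ t : ℝ, 0 ≤ t →
    HasDerivWithinAt (X n)
      (φ (n - 1) * kk β (n - 1) * (X (n - 1) t) ^ 2
        - φ n * kk β n * X n t * X (n + 1) t
        - kk β n / g n * X n t) (Set.Ici 0) t)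

/-- The energy inequality at time `t`:
`∑_{n≥1} Xₙ(t)² + ∫_0^t ∑_{n≥1} (2kₙ/gₙ) Xₙ(s)² ds ≤ ∑_{n≥1} xₙ²`. -/
def EnergyIneqAt (β : ℝ) (g x : ℕ → ℝ) (X : ℕ → ℝ → ℝ) (t : ℝ) : Prop :=
  (∑' n : ℕ, ENNReal.ofReal ((X (n + 1) t) ^ 2))
      + (∫⁻ s in Set.Ioc (0 : ℝ) t,
          ∑' n : ℕ, ENNReal.ofReal (2 * kk β (n + 1) / g (n + 1) * (X (n + 1) s) ^ 2))
    ≤ ∑' n : ℕ, ENNReal.ofReal ((x (n + 1)) ^ 2)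

/-- `‖φ‖_{ℓ^∞} = sup_{n≥1} |φₙ|`. -/
noncomputable def phiNorm (φ : ℕ → ℝ) : ℝ := ⨆ n : ℕ, |φ (n + 1)|

/-- For `gₙ, Φ, v > 0` this is exactly `Cₙ(v) = (1 + 1/((1/2) gₙ Φ v))⁻¹`. -/
noncomputable def Cfun (Φ : ℝ) (g : ℕ → ℝ) (n : ℕ) (v : ℝ) : ℝ :=
  (g n * Φ * v / 2) / (1 + g n * Φ * v / 2)

/-- `∑_{i ≥ n} xᵢ²`. -/
noncomputable def tail2 (x : ℕ → ℝ) (n : ℕ) : ℝ := ∑' i : ℕ, (x (n + i)) ^ 2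

/-- The bounding sequence for `x`: `y₁ = y₂ = 2‖x‖_H²` and
`y_{n+2} = C_{n+2}(√y_{n+1}) yₙ + ∑_{i ≥ n+2} xᵢ²`. -/
noncomputable def boundSeq (Φ : ℝ) (g x : ℕ → ℝ) : ℕ → ℝ
  | 0 => 0
  | 1 => 2 * tail2 x 1
  | 2 => 2 * tail2 x 1
  | n + 3 =>
      Cfun Φ g (n + 3) (Real.sqrt (boundSeq Φ g x (n + 2))) * boundSeq Φ g x (n + 1)
        + tail2 x (n + 3)

noncomputable def dd (β : ℝ) (g : ℕ → ℝ) (X : ℕ → ℝ → ℝ) (t : ℝ) (i : ℕ) : ℝ :=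
  ∫ s in (0:ℝ)..t, 2 * kk β i / g i * (X i s) ^ 2

noncomputable def FF (β : ℝ) (φ : ℕ → ℝ) (X : ℕ → ℝ → ℝ) (t : ℝ) (i : ℕ) : ℝ :=
  ∫ s in (0:ℝ)..t, 2 * φ i * kk β i * (X i s) ^ 2 * X (i + 1) s

lemma kk_pos (β : ℝ) (n : ℕ) : 0 < kk β n := by
  unfold kk; positivity

lemma kk_mono {β : ℝ} (hβ : 0 < β) (n : ℕ) : kk β n ≤ kk β (n + 1) := by
  unfold kk
  apply Real.rpow_le_rpow_of_exponent_le (by norm_num)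
  push_cast
  nlinarith

section
variable {β : ℝ} {φ g x : ℕ → ℝ} {X : ℕ → ℝ → ℝ}

lemma contX (hsol : IsDyadicSolution β φ g x X) (n : ℕ) : ContinuousOn (X n) (Ici 0) := by
  rcases Nat.eq_zero_or_pos n with rfl | hn
  · have : X 0 = fun _ => 0 := funext hsol.1
    rw [this]; exact continuousOn_const
  · intro t ht
    exact (hsol.2.2 n hn t ht).continuousWithinAt

lemma contX' (hsol : IsDyadicSolution β φ g x X) (n : ℕ) {t : ℝ} (ht : 0 ≤ t) :
    ContinuousOn (X n) (uIcc 0 t) := by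
  rw [uIcc_of_le ht]
  exact (contX hsol n).mono Icc_subset_Ici_self

lemma ftc (hsol : IsDyadicSolution β φ g x X) (n : ℕ) {t : ℝ} (ht : 0 ≤ t) :
    (X (n + 1) t) ^ 2 + dd β g X t (n + 1) + FF β φ X t (n + 1)
      = (x (n + 1)) ^ 2 + FF β φ X t n := by
  have c0 := contX' hsol n ht
  have c1 := contX' hsol (n + 1) ht
  have c2 := contX' hsol (n + 1 + 1) ht
  have i1 : IntervalIntegrable (fun s => 2 * kk β (n+1) / g (n+1) * (X (n+1) s) ^ 2) volume 0 t :=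
    ContinuousOn.intervalIntegrable (by fun_prop)
  have i2 : IntervalIntegrable (fun s => 2 * φ (n+1) * kk β (n+1) * (X (n+1) s) ^ 2 * X (n + 1 + 1) s)
    volume 0 t := ContinuousOn.intervalIntegrable (by fun_prop)
  have i3 : IntervalIntegrable (fun s => 2 * φ n * kk β n * (X n s) ^ 2 * X (n + 1) s)
    volume 0 t := ContinuousOn.intervalIntegrable (by fun_prop)
  have key : ∫ s in (0:ℝ)..t, (2 * φ n * kk β n * (X n s) ^ 2 * X (n + 1) s
      - 2 * φ (n+1) * kk β (n+1) * (X (n+1) s) ^ 2 * X (n + 1 + 1) s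
      - 2 * kk β (n+1) / g (n+1) * (X (n+1) s) ^ 2) = (X (n+1) t) ^ 2 - (X (n+1) 0) ^ 2 := by
    apply intervalIntegral.integral_eq_sub_of_hasDeriv_right (f := fun s => (X (n+1) s) ^ 2)
    · fun_prop
    · intro s hs
      rw [min_eq_left ht] at hs
      have h := (hsol.2.2 (n+1) (by omega) s hs.1.le).mono
        (show Ioi s ⊆ Ici 0 from fun u hu => (hs.1.trans hu).le)
      have h2 := h.pow 2
      refine h2.congr_deriv ?_
      simp only [Nat.add_sub_cancel]
      push_cast
      ring
    · exact (i3.sub i2).sub i1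
  rw [intervalIntegral.integral_sub (i3.sub i2) i1, intervalIntegral.integral_sub i3 i2,
    hsol.2.1 (n+1) (by omega)] at key
  unfold dd FF
  linarith

lemma balance (hsol : IsDyadicSolution β φ g x X) (n : ℕ) {t : ℝ} (ht : 0 ≤ t) :
    ∑ i ∈ Finset.range n, ((X (i + 1) t) ^ 2 + dd β g X t (i + 1)) + FF β φ X t n
      = ∑ i ∈ Finset.range n, (x (i + 1)) ^ 2 := by
  induction n with
  | zero => simp [FF, hsol.1]
  | succ n ih =>
    rw [Finset.sum_range_succ, Finset.sum_range_succ]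
    have := ftc hsol n ht
    linarith

lemma dd_nonneg (hgpos : ∀ n : ℕ, 1 ≤ n → 0 < g n) {t : ℝ} (ht : 0 ≤ t) (i : ℕ) :
    0 ≤ dd β g X t (i + 1) := by
  apply intervalIntegral.integral_nonneg ht
  intro s _
  have := hgpos (i+1) (by omega)
  have := kk_pos β (i+1)
  positivity

lemma energy (hgpos : ∀ n : ℕ, 1 ≤ n → 0 < g n)
    (hxH : Summable fun n : ℕ => (x (n + 1)) ^ 2)
    (hsol : IsDyadicSolution β φ g x X) {t : ℝ} (ht : 0 ≤ t)
    (hE : EnergyIneqAt β g x X t) (N : ℕ) :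
    ∑ i ∈ Finset.range N, ((X (i + 1) t) ^ 2 + dd β g X t (i + 1)) ≤ tail2 x 1 := by
  have hc : ∀ i s, 0 ≤ 2 * kk β (i+1) / g (i+1) * (X (i+1) s) ^ 2 := by
    intro i s
    have := hgpos (i+1) (by omega)
    have := kk_pos β (i+1)
    positivity
  have ht2 : ∑' n : ℕ, ENNReal.ofReal ((x (n + 1)) ^ 2) = ENNReal.ofReal (tail2 x 1) := by
    rw [← ENNReal.ofReal_tsum_of_nonneg (fun _ => sq_nonneg _) hxH]
    simp [tail2, add_comm]
  have ht2n : 0 ≤ tail2 x 1 := tsum_nonneg fun _ => sq_nonneg _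
  have hint : ∀ i, IntervalIntegrable (fun s => 2 * kk β (i+1) / g (i+1) * (X (i+1) s) ^ 2)
      volume 0 t := by
    intro i
    have c1 := contX' hsol (i + 1) ht
    exact ContinuousOn.intervalIntegrable (by fun_prop)
  have hD : ENNReal.ofReal (∑ i ∈ Finset.range N, dd β g X t (i + 1)) ≤
      ∫⁻ s in Set.Ioc (0 : ℝ) t,
          ∑' n : ℕ, ENNReal.ofReal (2 * kk β (n + 1) / g (n + 1) * (X (n + 1) s) ^ 2) := by
    have h1 : ∑ i ∈ Finset.range N, dd β g X t (i + 1)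
        = ∫ s in Set.Ioc (0:ℝ) t, ∑ i ∈ Finset.range N,
          2 * kk β (i+1) / g (i+1) * (X (i+1) s) ^ 2 := by
      rw [integral_finsetSum]
      · apply Finset.sum_congr rfl
        intro i _
        rw [dd, intervalIntegral.integral_of_le ht]
      · intro i _
        exact (intervalIntegrable_iff_integrableOn_Ioc_of_le ht).1 (hint i)
    rw [h1, ofReal_integral_eq_lintegral_ofReal]
    · apply lintegral_mono
      intro s
      simp only
      rw [ENNReal.ofReal_sum_of_nonneg (fun i _ => hc i s)]
      exact ENNReal.sum_le_tsum _
    · exact integrable_finsetSum _ fun i _ =>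
        (intervalIntegrable_iff_integrableOn_Ioc_of_le ht).1 (hint i)
    · exact Eventually.of_forall fun s => Finset.sum_nonneg fun i _ => hc i s
  have hX : ENNReal.ofReal (∑ i ∈ Finset.range N, (X (i + 1) t) ^ 2) ≤
      ∑' n : ℕ, ENNReal.ofReal ((X (n + 1) t) ^ 2) := by
    rw [ENNReal.ofReal_sum_of_nonneg (fun i _ => sq_nonneg _)]
    exact ENNReal.sum_le_tsum _
  unfold EnergyIneqAt at hE
  rw [ht2] at hE
  have := (add_le_add hX hD).trans hE
  rw [← ENNReal.ofReal_add (Finset.sum_nonneg fun i _ => sq_nonneg _)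
    (Finset.sum_nonneg fun i _ => dd_nonneg hgpos ht i)] at this
  rw [Finset.sum_add_distrib]
  exact (ENNReal.ofReal_le_ofReal_iff ht2n).1 this

lemma ptwise {Φ f k k' γ γ' u w v : ℝ} (hk : 0 < k) (hkk : k ≤ k') (hg : 0 < γ) (hgg : γ ≤ γ')
    (hf : |f| ≤ Φ) (hu : |u| ≤ v) :
    2 * f * k * u ^ 2 * w ≤ γ' * Φ * v / 2 * (2 * k / γ * u ^ 2 + 2 * k' / γ' * w ^ 2) := by
  have hΦ : 0 ≤ Φ := (abs_nonneg _).trans hf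
  have hv : 0 ≤ v := (abs_nonneg _).trans hu
  have hg' : 0 < γ' := hg.trans_le hgg
  have e : γ' * Φ * v / 2 * (2 * k / γ * u ^ 2 + 2 * k' / γ' * w ^ 2)
      = Φ * v * (k * (γ' / γ) * u ^ 2 + k' * w ^ 2) := by
    field_simp
  rw [e]
  have h1 : 1 ≤ γ' / γ := (one_le_div hg).2 hgg
  have h2 : 2 * f * k * u ^ 2 * w ≤ 2 * k * ((|f| * |u|) * (|u| * |w|)) := by
    have : 2 * k * ((|f| * |u|) * (|u| * |w|)) = |2 * f * k * u ^ 2 * w| := by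
      simp only [abs_mul, abs_pow, abs_of_pos hk, abs_two]; ring
    rw [this]; exact le_abs_self _
  have h3 : |f| * |u| ≤ Φ * v := mul_le_mul hf hu (abs_nonneg _) hΦ
  have h4 : 2 * (|u| * |w|) ≤ u ^ 2 + w ^ 2 := by
    rw [← sq_abs u, ← sq_abs w]; nlinarith [sq_nonneg (|u| - |w|)]
  calc _ ≤ _ := h2
    _ ≤ 2 * k * ((Φ * v) * (|u| * |w|)) := by gcongr
    _ = Φ * v * (k * (2 * (|u| * |w|))) := by ring
    _ ≤ Φ * v * (k * (u ^ 2 + w ^ 2)) := by gcongr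
    _ = Φ * v * (k * 1 * u ^ 2 + k * w ^ 2) := by ring
    _ ≤ _ := by gcongr

lemma flux (hβ : 0 < β) (hφbdd : BddAbove (Set.range fun n : ℕ => |φ (n + 1)|))
    (hgpos : ∀ n : ℕ, 1 ≤ n → 0 < g n)
    (hgmono : ∀ n m : ℕ, 1 ≤ n → n ≤ m → g n ≤ g m)
    (hsol : IsDyadicSolution β φ g x X) {t : ℝ} (ht : 0 ≤ t) (n : ℕ) (v : ℝ)
    (hv : ∀ s, 0 ≤ s → s ≤ t → |X (n + 1) s| ≤ v) :
    FF β φ X t (n + 1) ≤ g (n + 2) * phiNorm φ * v / 2 *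
      (dd β g X t (n + 1) + dd β g X t (n + 2)) := by
  have c1 := contX' hsol (n + 1) ht
  have c2 := contX' hsol (n + 2) ht
  have i1 : IntervalIntegrable (fun s => 2 * kk β (n+1) / g (n+1) * (X (n+1) s) ^ 2) volume 0 t :=
    ContinuousOn.intervalIntegrable (by fun_prop)
  have i2 : IntervalIntegrable (fun s => 2 * kk β (n+2) / g (n+2) * (X (n+2) s) ^ 2) volume 0 t :=
    ContinuousOn.intervalIntegrable (by fun_prop)
  have i3 : IntervalIntegrable (fun s => 2 * φ (n+1) * kk β (n+1) * (X (n+1) s) ^ 2 * X (n + 2) s)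
    volume 0 t := ContinuousOn.intervalIntegrable (by fun_prop)
  unfold dd FF
  rw [← intervalIntegral.integral_add i1 i2, ← intervalIntegral.integral_const_mul]
  apply intervalIntegral.integral_mono_on ht i3 ((i1.add i2).const_mul _)
  intro s hs
  exact ptwise (kk_pos β _) (kk_mono hβ (n+1)) (hgpos _ (by omega))
    (hgmono _ _ (by omega) (by omega)) (le_ciSup hφbdd n) (hv s hs.1 hs.2)

lemma tail_split (hxH : Summable fun n : ℕ => (x (n + 1)) ^ 2) (n : ℕ) :
    ∑ i ∈ Finset.range n, (x (i + 1)) ^ 2 + tail2 x (n + 1) = tail2 x 1 := by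
  have := hxH.sum_add_tsum_nat_add n
  have e1 : ∀ i, n + 1 + i = i + n + 1 := fun i => by omega
  have e2 : ∀ i, 1 + i = i + 1 := fun i => by omega
  simp only [tail2, e1, e2]
  exact this

lemma main_bound (hβ : 0 < β) (hφbdd : BddAbove (Set.range fun n : ℕ => |φ (n + 1)|))
    (hgpos : ∀ n : ℕ, 1 ≤ n → 0 < g n)
    (hgmono : ∀ n m : ℕ, 1 ≤ n → n ≤ m → g n ≤ g m)
    (T : ℝ) (hxH : Summable fun n : ℕ => (x (n + 1)) ^ 2)
    (hsol : IsDyadicSolution β φ g x X)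
    (hEI : ∀ t : ℝ, 0 ≤ t → t < T → EnergyIneqAt β g x X t) (n : ℕ) :
    ∀ t : ℝ, 0 ≤ t → t < T → ∀ N, 
      (X (n + 1) t) ^ 2 + ∑ i ∈ Finset.range N, ((X (n + i + 2) t) ^ 2 + dd β g X t (n + i + 2))
        ≤ boundSeq (phiNorm φ) g x (n + 1) := by
  have htn : ∀ m, 0 ≤ tail2 x m := fun m => tsum_nonneg fun _ => sq_nonneg _
  induction n using Nat.twoStepInduction with
  | zero =>
    intro t ht hT N
    have h := energy hgpos hxH hsol ht (hEI t ht hT) (N + 1)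
    rw [Finset.sum_range_succ'] at h
    have h1 := dd_nonneg (β := β) (X := X) hgpos ht 0
    have h2 := htn 1
    simp only [boundSeq, zero_add] at *
    linarith
  | one =>
    intro t ht hT N
    have h := energy hgpos hxH hsol ht (hEI t ht hT) (N + 2)
    rw [Finset.sum_range_succ', Finset.sum_range_succ'] at h
    have h1 := dd_nonneg (β := β) (X := X) hgpos ht 0
    have h3 := dd_nonneg (β := β) (X := X) hgpos ht 1
    have h2 := htn 1
    have h4 := sq_nonneg (X 1 t)
    have e : ∀ i, 1 + i + 2 = i + 1 + 1 + 1 := fun i => by omega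
    simp only [boundSeq, zero_add, e] at *
    norm_num at *
    linarith
  | more n ih1 ih2 =>
    intro t ht hT N
    set y1 := boundSeq (phiNorm φ) g x (n + 1) with hy1
    set y2 := boundSeq (phiNorm φ) g x (n + 2) with hy2
    have hv : ∀ s, 0 ≤ s → s ≤ t → |X (n + 2) s| ≤ Real.sqrt y2 := by
      intro s hs hst
      have := ih2 s hs (hst.trans_lt hT) 0
      apply Real.abs_le_sqrt
      simpa using this
    have hfl := flux hβ hφbdd hgpos hgmono hsol ht (n + 1) _ hv
    have hbal := balance hsol (n + 2) ht
    have hen := energy hgpos hxH hsol ht (hEI t ht hT) (n + 2 + (N + 1))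
    rw [Finset.sum_range_add] at hen
    have htl := tail_split hxH (n + 2)
    have hih := ih1 t ht hT (N + 2)
    have hy : boundSeq (phiNorm φ) g x (n + 2 + 1)
      = Cfun (phiNorm φ) g (n + 3) (Real.sqrt y2) * y1 + tail2 x (n + 3) := rfl
    rw [hy]
    unfold Cfun
    set b := g (n + 3) * phiNorm φ * Real.sqrt y2 / 2 with hb
    have hΦ : 0 ≤ phiNorm φ := (abs_nonneg _).trans (le_ciSup hφbdd 0)
    have hb0 : 0 ≤ b := by
      have := hgpos (n+3) (by omega)
      positivity
    rw [Finset.sum_range_succ', Finset.sum_range_succ'] at hih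
    rw [Finset.sum_range_succ' _ N] at hen
    have d0 := dd_nonneg (β := β) (X := X) hgpos ht (n + 1)
    have d1 := dd_nonneg (β := β) (X := X) hgpos ht (n + 2)
    have s0 := sq_nonneg (X (n + 1) t)
    have s1 := sq_nonneg (X (n + 2) t)
    have e1 : ∀ i, n + 2 + (i + 1) + 1 = n + i + 4 := fun i => by omega
    have e2 : ∀ i, n + (i + 1 + 1) + 2 = n + i + 4 := fun i => by omega
    have e3 : ∀ i, n + 2 + i + 2 = n + i + 4 := fun i => by omega
    simp only [e1, e2, e3] at hen hih ⊢
    simp only [add_zero, zero_add, add_assoc, Nat.reduceAdd] at hen hih hfl hbal htl d0 d1 s0 s1 ⊢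
    set S := ∑ i ∈ Finset.range N, ((X (n + (i + 4)) t) ^ 2 + dd β g X t (n + (i + 4))) with hS
    have h5 := htn (n + 3)
    have key : X (n + 3) t ^ 2 + S ≤ tail2 x (n + 3) + b * (y1 - (X (n + 3) t ^ 2 + S)) := by
      have : b * (dd β g X t (n + 2) + dd β g X t (n + 3)) ≤ b * (y1 - (X (n + 3) t ^ 2 + S)) := by
        apply mul_le_mul_of_nonneg_left _ hb0
        linarith
      linarith
    rw [div_mul_eq_mul_div, ← sub_le_iff_le_add, le_div_iff₀ (by linarith)]
    nlinarith
end

/-- Lemma 3.3: `Xₙ(t)² ≤ yₙ` where `y` is the bounding sequence for the initial datum. -/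
theorem dyadic_solution_le_boundSeq
    (β : ℝ) (hβ : 0 < β) (φ g : ℕ → ℝ)
    (hφbdd : BddAbove (Set.range fun n : ℕ => |φ (n + 1)|))
    (hgpos : ∀ n : ℕ, 1 ≤ n → 0 < g n)
    (hgmono : ∀ n m : ℕ, 1 ≤ n → n ≤ m → g n ≤ g m)
    (T : ℝ) (hT : 0 < T)
    (x : ℕ → ℝ) (hxH : Summable fun n : ℕ => (x (n + 1)) ^ 2)
    (X : ℕ → ℝ → ℝ) (hsol : IsDyadicSolution β φ g x X)
    (hEI : ∀ t : ℝ, 0 ≤ t → t < T → EnergyIneqAt β g x X t) :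
    ∀ n : ℕ, 1 ≤ n → ∀ t : ℝ, 0 ≤ t → t < T →
      (X n t) ^ 2 ≤ boundSeq (phiNorm φ) g x n := by
  intro n hn t ht htT
  obtain ⟨m, rfl⟩ : ∃ m, n = m + 1 := ⟨n - 1, by omega⟩
  simpa using main_bound hβ hφbdd hgpos hgmono T hxH hsol hEI m t ht htT 0
end

section
/- Suppose g is non-decreasing and ∑_{n≥1} g_n^{-1} = ∞. Let x ∈ H^s for some s>0 and let y be the bounding sequence for x. For n≥1 set h_n = ∑_{j≥n} ∑_{i≥j} x_i². Then for all n≥1 and m≥0, y_{n+2m} ≤ y_n · ∏_{i=1}^{m} C_{n+2i}(y_{n+2i-1}^{1/2}) + h_n. Moreover y_n → 0 as n → ∞. -/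
open scoped BigOperators ENNReal
open MeasureTheory Filter Set Topology

/-- `x ∈ Hˢ`, i.e. `∑_{n≥1} 2^{2sn} xₙ² < ∞`. -/
def MemHs (s : ℝ) (x : ℕ → ℝ) : Prop :=
  Summable (fun n : ℕ => (2 : ℝ) ^ (2 * s * ((n : ℝ) + 1)) * (x (n + 1)) ^ 2)

theorem aux_summ {s : ℝ} (hs : 0 < s) {x : ℕ → ℝ} (hx : MemHs s x) :
    Summable (fun n : ℕ => (x (n + 1)) ^ 2) := by
  refine Summable.of_nonneg_of_le (fun n => sq_nonneg _) (fun n => ?_) hx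
  have : (1 : ℝ) ≤ (2 : ℝ) ^ (2 * s * ((n : ℝ) + 1)) :=
    Real.one_le_rpow (by norm_num) (by positivity)
  nlinarith [sq_nonneg (x (n + 1))]

theorem tail2_nonneg (x : ℕ → ℝ) (n : ℕ) : 0 ≤ tail2 x n :=
  tsum_nonneg (fun _ => sq_nonneg _)

theorem tail2_summ {s : ℝ} (hs : 0 < s) {x : ℕ → ℝ} (hx : MemHs s x) :
    Summable (fun n : ℕ => tail2 x (n + 1)) := by
  set S := ∑' n : ℕ, (2 : ℝ) ^ (2 * s * ((n : ℝ) + 1)) * (x (n + 1)) ^ 2 with hS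
  have hr0 : (0 : ℝ) < (2 : ℝ) ^ (-(2 * s)) := by positivity
  have hr1 : (2 : ℝ) ^ (-(2 * s)) < 1 :=
    Real.rpow_lt_one_of_one_lt_of_neg (by norm_num) (by linarith)
  have hgeo : Summable (fun n : ℕ => ((2 : ℝ) ^ (-(2 * s))) ^ n * S) :=
    (summable_geometric_of_lt_one hr0.le hr1).mul_right S
  refine Summable.of_nonneg_of_le (fun n => tail2_nonneg _ _) (fun n => ?_) hgeo
  have hsn : Summable (fun i : ℕ => (2 : ℝ) ^ (2 * s * (((i + n : ℕ) : ℝ) + 1)) * (x (i + n + 1)) ^ 2) :=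
    (summable_nat_add_iff (f := fun n : ℕ => (2 : ℝ) ^ (2 * s * ((n : ℝ) + 1)) * (x (n + 1)) ^ 2) n).2 hx
  have h1 : ∑' i : ℕ, (2 : ℝ) ^ (2 * s * (((i + n : ℕ) : ℝ) + 1)) * (x (i + n + 1)) ^ 2 ≤ S := by
    have := hx.sum_add_tsum_nat_add n
    rw [← hS] at this
    have h0 : 0 ≤ ∑ i ∈ Finset.range n, (2 : ℝ) ^ (2 * s * ((i : ℝ) + 1)) * (x (i + 1)) ^ 2 :=
      Finset.sum_nonneg (fun i _ => by positivity)
    linarith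
  have h2 : tail2 x (n + 1) ≤ ∑' i : ℕ, ((2 : ℝ) ^ (-(2 * s))) ^ n *
      ((2 : ℝ) ^ (2 * s * (((i + n : ℕ) : ℝ) + 1)) * (x (i + n + 1)) ^ 2) := by
    unfold tail2
    refine Summable.tsum_le_tsum (fun i => ?_) ?_ (hsn.mul_left _)
    · have e : n + 1 + i = i + n + 1 := by ring
      rw [e, ← mul_assoc, ← Real.rpow_natCast ((2 : ℝ) ^ (-(2 * s))) n, ← Real.rpow_mul (by norm_num),
        ← Real.rpow_add (by norm_num)]
      have : (1 : ℝ) ≤ (2 : ℝ) ^ (-(2 * s) * (n : ℝ) + 2 * s * (((i + n : ℕ) : ℝ) + 1)) := by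
        refine Real.one_le_rpow (by norm_num) ?_
        push_cast
        have : -(2 * s) * (n : ℝ) + 2 * s * ((i : ℝ) + n + 1) = 2 * s * (i + 1) := by ring
        rw [this]; positivity
      nlinarith [sq_nonneg (x (i + n + 1))]
    · have := (summable_nat_add_iff (f := fun n : ℕ => (x (n + 1)) ^ 2) n).2 (aux_summ hs hx)
      refine this.congr (fun i => ?_)
      congr 2; ring
  rw [tsum_mul_left] at h2
  exact h2.trans (mul_le_mul_of_nonneg_left h1 (by positivity))

theorem Cfun_nonneg {Φ : ℝ} {g : ℕ → ℝ} {n : ℕ} {v : ℝ} (hΦ : 0 ≤ Φ) (hg : 0 < g n) (hv : 0 ≤ v) :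
    0 ≤ Cfun Φ g n v := by
  unfold Cfun; positivity

theorem Cfun_le_one {Φ : ℝ} {g : ℕ → ℝ} {n : ℕ} {v : ℝ} (hΦ : 0 ≤ Φ) (hg : 0 < g n) (hv : 0 ≤ v) :
    Cfun Φ g n v ≤ 1 := by
  unfold Cfun
  have : 0 ≤ g n * Φ * v / 2 := by positivity
  rw [div_le_one (by linarith)]; linarith

theorem Cfun_le {Φ : ℝ} {g : ℕ → ℝ} {n : ℕ} {v V : ℝ} (hΦ : 0 ≤ Φ) (hg1 : 0 < g 1)
    (hg : g 1 ≤ g n) (hv : 0 ≤ v) (hV : v ≤ V) :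
    Cfun Φ g n v ≤ 1 - ((g 1)⁻¹ + Φ * V / 2)⁻¹ * (g n)⁻¹ := by
  have hgn : 0 < g n := hg1.trans_le hg
  have h0 : 0 ≤ g n * Φ * v / 2 := by positivity
  have hV0 : 0 ≤ V := hv.trans hV
  have e : Cfun Φ g n v = 1 - (1 + g n * Φ * v / 2)⁻¹ := by
    unfold Cfun
    have : 1 + g n * Φ * v / 2 ≠ 0 := by linarith
    field_simp
    ring
  rw [e, ← mul_inv]
  have h1 : 1 ≤ (g 1)⁻¹ * g n := by
    rw [inv_mul_eq_div, le_div_iff₀ hg1]; linarith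
  have h2 : g n * Φ * v ≤ g n * Φ * V := mul_le_mul_of_nonneg_left hV (by positivity)
  have : (((g 1)⁻¹ + Φ * V / 2) * g n)⁻¹ ≤ (1 + g n * Φ * v / 2)⁻¹ := by
    apply inv_anti₀ (by linarith)
    nlinarith
  linarith

theorem boundSeq_rec (Φ : ℝ) (g x : ℕ → ℝ) (n : ℕ) (hn : 1 ≤ n) :
    boundSeq Φ g x (n + 2) = Cfun Φ g (n + 2) (Real.sqrt (boundSeq Φ g x (n + 1)))
      * boundSeq Φ g x n + tail2 x (n + 2) := by
  obtain ⟨k, rfl⟩ : ∃ k, n = k + 1 := ⟨n - 1, by omega⟩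
  rw [show k + 1 + 2 = k + 3 by ring, show k + 1 + 1 = k + 2 by ring, boundSeq]

theorem boundSeq_nonneg {Φ : ℝ} {g : ℕ → ℝ} (x : ℕ → ℝ) (hΦ : 0 ≤ Φ)
    (hg : ∀ n : ℕ, 1 ≤ n → 0 < g n) (n : ℕ) : 0 ≤ boundSeq Φ g x n := by
  induction n using Nat.strong_induction_on with
  | _ n ih =>
    match n, ih with
    | 0, _ => simp [boundSeq]
    | 1, _ => simp only [boundSeq]; linarith [tail2_nonneg x 1]
    | 2, _ => simp only [boundSeq]; linarith [tail2_nonneg x 1]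
    | n + 3, ih =>
      rw [boundSeq]
      exact add_nonneg (mul_nonneg (Cfun_nonneg hΦ (hg _ (by omega)) (Real.sqrt_nonneg _))
        (ih _ (by omega))) (tail2_nonneg _ _)

theorem boundSeq_prod {Φ : ℝ} {g : ℕ → ℝ} (x : ℕ → ℝ) (hΦ : 0 ≤ Φ)
    (hg : ∀ n : ℕ, 1 ≤ n → 0 < g n) (n m : ℕ) (hn : 1 ≤ n) :
    boundSeq Φ g x (n + 2 * m) ≤ boundSeq Φ g x n
            * (∏ i ∈ Finset.Icc 1 m,
                Cfun Φ g (n + 2 * i) (Real.sqrt (boundSeq Φ g x (n + 2 * i - 1))))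
          + ∑ j ∈ Finset.range (2 * m + 1), tail2 x (n + j) := by
  induction m with
  | zero => simp [tail2_nonneg]
  | succ m ih =>
    rw [Finset.prod_Icc_succ_top (by omega), show n + 2 * (m + 1) = (n + 2 * m) + 2 by ring,
      boundSeq_rec _ _ _ _ (by omega), show n + 2 * m + 2 - 1 = n + 2 * m + 1 by omega,
      show 2 * (m + 1) + 1 = 2 * m + 1 + 1 + 1 by ring, Finset.sum_range_succ,
      Finset.sum_range_succ, show n + (2 * m + 1 + 1) = n + 2 * m + 2 by ring]
    have hv := Real.sqrt_nonneg (boundSeq Φ g x (n + 2 * m + 1))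
    have c0 := Cfun_nonneg (n := n + 2 * m + 2) hΦ (hg _ (by omega)) hv
    have c1 := Cfun_le_one (n := n + 2 * m + 2) hΦ (hg _ (by omega)) hv
    have hs : 0 ≤ ∑ j ∈ Finset.range (2 * m + 1), tail2 x (n + j) :=
      Finset.sum_nonneg (fun _ _ => tail2_nonneg _ _)
    have h1 := mul_le_mul_of_nonneg_left ih c0
    have h2 := mul_le_mul_of_nonneg_right c1 hs
    have h3 := tail2_nonneg x (n + (2 * m + 1))
    rw [mul_add] at h1
    linarith

theorem gen_lemma (u t γ : ℕ → ℝ) (hu : ∀ k, 0 ≤ u k) (ht0 : ∀ k, 0 ≤ t k) (hγ : ∀ k, 0 ≤ γ k)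
    (ht : Summable t) (hdiv : ¬ Summable γ)
    (h : ∀ k, u (k + 1) ≤ (1 - γ k) * u k + t k) : Tendsto u atTop (𝓝 0) := by
  have hw : Antitone (fun k => u k - ∑ i ∈ Finset.range k, t i) := by
    refine antitone_nat_of_succ_le (fun k => ?_)
    rw [Finset.sum_range_succ]
    nlinarith [h k, mul_nonneg (hγ k) (hu k)]
  have hb : BddBelow (Set.range (fun k => u k - ∑ i ∈ Finset.range k, t i)) := by
    refine ⟨-∑' i, t i, ?_⟩
    rintro _ ⟨k, rfl⟩
    have := ht.sum_le_tsum (Finset.range k) (fun i _ => ht0 i)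
    have := hu k
    simp only
    linarith
  have hl := (tendsto_atTop_ciInf hw hb).add ht.hasSum.tendsto_sum_nat
  simp only [sub_add_cancel] at hl
  set L := (⨅ k, (u k - ∑ i ∈ Finset.range k, t i)) + ∑' i, t i
  have hL : 0 ≤ L := ge_of_tendsto' hl hu
  rcases hL.eq_or_lt with h0 | hpos
  · rwa [← h0] at hl
  exfalso
  have hsum : Summable (fun k => γ k * u k) := by
    refine summable_of_sum_range_le (c := u 0 + ∑' i, t i)
      (fun k => mul_nonneg (hγ k) (hu k)) (fun n => ?_)
    have key : ∑ i ∈ Finset.range n, γ i * u i + u n ≤ u 0 + ∑ i ∈ Finset.range n, t i := by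
      induction n with
      | zero => simp
      | succ n ih =>
        rw [Finset.sum_range_succ, Finset.sum_range_succ]
        nlinarith [h n]
    have := ht.sum_le_tsum (Finset.range n) (fun i _ => ht0 i)
    have := hu n
    linarith
  obtain ⟨N, hN⟩ := eventually_atTop.1 (hl.eventually (lt_mem_nhds (half_lt_self hpos)))
  apply hdiv
  rw [← summable_nat_add_iff N]
  refine Summable.of_nonneg_of_le (fun k => hγ _) (fun k => ?_)
    (((summable_nat_add_iff N).2 hsum).mul_left (2 / L))
  have h1 := hN (k + N) (by omega)
  have h2 : 1 ≤ 2 / L * u (k + N) := by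
    rw [div_mul_eq_mul_div, le_div_iff₀ hpos]; linarith
  nlinarith [hγ (k + N)]

theorem parity_div (a : ℕ → ℝ) (q : ℕ) (ha0 : ∀ n, 0 ≤ a n) (ha : Antitone a) (hdiv : ¬ Summable a) :
    ¬ Summable (fun k => a (2 * k + q)) := by
  intro h
  apply hdiv
  rw [← summable_nat_add_iff q]
  have h2 : Summable (fun k => a (2 * k + 1 + q)) :=
    Summable.of_nonneg_of_le (fun k => ha0 _) (fun k => ha (by omega)) h
  exact (HasSum.even_add_odd (f := fun n => a (n + q)) h.hasSum h2.hasSum).summable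

/-- Lemma 3.4: `y_{n+2m} ≤ yₙ ∏_{i=1}^m C_{n+2i}(√y_{n+2i-1}) + hₙ` where
`hₙ = ∑_{j≥n} ∑_{i≥j} xᵢ²`, and `yₙ → 0`. -/
theorem boundSeq_product_bound_and_tendsto_zero
    (β : ℝ) (hβ : 0 < β) (φ g : ℕ → ℝ)
    (hφbdd : BddAbove (Set.range fun n : ℕ => |φ (n + 1)|))
    (hgpos : ∀ n : ℕ, 1 ≤ n → 0 < g n)
    (hgmono : ∀ n m : ℕ, 1 ≤ n → n ≤ m → g n ≤ g m)
    (hgdiv : ¬ Summable fun n : ℕ => (g (n + 1))⁻¹)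
    (s : ℝ) (hs : 0 < s) (x : ℕ → ℝ) (hx : MemHs s x) :
    (∀ n m : ℕ, 1 ≤ n →
      boundSeq (phiNorm φ) g x (n + 2 * m)
        ≤ boundSeq (phiNorm φ) g x n
            * (∏ i ∈ Finset.Icc 1 m,
                Cfun (phiNorm φ) g (n + 2 * i)
                  (Real.sqrt (boundSeq (phiNorm φ) g x (n + 2 * i - 1))))
          + ∑' j : ℕ, ∑' i : ℕ, (x (n + j + i)) ^ 2) ∧
    Filter.Tendsto (fun n : ℕ => boundSeq (phiNorm φ) g x n) Filter.atTop (nhds 0) := by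
  have hΦ : 0 ≤ phiNorm φ := Real.iSup_nonneg (fun _ => abs_nonneg _)
  have hT := tail2_summ hs hx
  have hTn : ∀ n, 1 ≤ n → Summable (fun j => tail2 x (n + j)) := by
    intro n hn
    refine ((summable_nat_add_iff (n - 1)).2 hT).congr (fun j => ?_)
    congr 1; omega
  have part1 : ∀ n m : ℕ, 1 ≤ n →
      boundSeq (phiNorm φ) g x (n + 2 * m)
        ≤ boundSeq (phiNorm φ) g x n
            * (∏ i ∈ Finset.Icc 1 m,
                Cfun (phiNorm φ) g (n + 2 * i)
                  (Real.sqrt (boundSeq (phiNorm φ) g x (n + 2 * i - 1))))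
          + ∑' j : ℕ, tail2 x (n + j) := by
    intro n m hn
    have h1 := boundSeq_prod x hΦ hgpos n m hn
    have h2 := (hTn n hn).sum_le_tsum (Finset.range (2 * m + 1)) (fun i _ => tail2_nonneg _ _)
    linarith
  refine ⟨part1, ?_⟩
  have hy := boundSeq_nonneg (Φ := phiNorm φ) x hΦ hgpos
  have hbd : ∀ p m, 1 ≤ p → boundSeq (phiNorm φ) g x (p + 2 * m) ≤
      boundSeq (phiNorm φ) g x p + ∑' j : ℕ, tail2 x (p + j) := by
    intro p m hp
    have h1 := part1 p m hp
    have h2 : (∏ i ∈ Finset.Icc 1 m, Cfun (phiNorm φ) g (p + 2 * i)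
        (Real.sqrt (boundSeq (phiNorm φ) g x (p + 2 * i - 1)))) ≤ 1 :=
      Finset.prod_le_one
        (fun i _ => Cfun_nonneg hΦ (hgpos _ (by omega)) (Real.sqrt_nonneg _))
        (fun i _ => Cfun_le_one hΦ (hgpos _ (by omega)) (Real.sqrt_nonneg _))
    nlinarith [hy p]
  have hpar : ∀ p, 1 ≤ p →
      Tendsto (fun k => boundSeq (phiNorm φ) g x (p + 2 * k)) atTop (𝓝 0) := by
    intro p hp
    set V := Real.sqrt (boundSeq (phiNorm φ) g x (p + 1) + ∑' j : ℕ, tail2 x (p + 1 + j)) with hV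
    have hg1 := hgpos 1 le_rfl
    set c := ((g 1)⁻¹ + phiNorm φ * V / 2)⁻¹ with hc
    have hcpos : 0 < c := by
      have : 0 ≤ V := Real.sqrt_nonneg _
      positivity
    refine gen_lemma _ (fun k => tail2 x (p + 2 * k + 2)) (fun k => c * (g (p + 2 * k + 2))⁻¹)
      (fun k => hy _) (fun k => tail2_nonneg _ _)
      (fun k => mul_nonneg hcpos.le (inv_nonneg.2 (hgpos _ (by omega)).le)) ?_ ?_ ?_
    · have := (hTn p hp).comp_injective (i := fun k : ℕ => 2 * k + 2)
        (fun a b h => by simp only at h; omega)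
      exact this
    · intro hsum
      have h1 := (summable_mul_left_iff hcpos.ne').1 hsum
      refine parity_div (fun n => (g (n + 1))⁻¹) (p + 1)
        (fun n => inv_nonneg.2 (hgpos _ (by omega)).le) ?_ hgdiv ?_
      · intro a b hab
        exact inv_anti₀ (hgpos _ (by omega)) (hgmono _ _ (by omega) (by omega))
      · refine h1.congr (fun k => ?_)
        congr 2; ring
    · intro k
      have e : p + 2 * (k + 1) = p + 2 * k + 2 := by ring
      simp only [e]
      rw [boundSeq_rec _ _ _ _ (by omega)]
      have hv : Real.sqrt (boundSeq (phiNorm φ) g x (p + 2 * k + 1)) ≤ V := by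
        apply Real.sqrt_le_sqrt
        have := hbd (p + 1) k (by omega)
        rwa [show p + 1 + 2 * k = p + 2 * k + 1 by ring] at this
      have := Cfun_le (n := p + 2 * k + 2) hΦ hg1 (hgmono _ _ le_rfl (by omega))
        (Real.sqrt_nonneg _) hv
      have := mul_le_mul_of_nonneg_right this (hy (p + 2 * k))
      linarith
  rw [Metric.tendsto_atTop]
  intro ε hε
  obtain ⟨N1, h1⟩ := Metric.tendsto_atTop.1 (hpar 1 le_rfl) ε hε
  obtain ⟨N2, h2⟩ := Metric.tendsto_atTop.1 (hpar 2 (by omega)) ε hε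
  refine ⟨2 * N1 + 2 * N2 + 3, fun n hn => ?_⟩
  rcases Nat.even_or_odd' n with ⟨k, rfl | rfl⟩
  · have := h2 (k - 1) (by omega)
    rwa [show 2 + 2 * (k - 1) = 2 * k by omega] at this
  · have := h1 k (by omega)
    rwa [show 1 + 2 * k = 2 * k + 1 by omega] at this
end

section
/- Suppose g is non-decreasing and ∑_{n≥1} g_n^{-1} = ∞. Let x ∈ H^s for some s>0 and let y be the bounding sequence for x. Then there exist an integer n_0 ≥ 1 and a real θ > 0 such that the sequence (n_k)_{k≥0} defined recursively by n_{k+1} = inf{ n ≥ n_k+2 : ∑_{j=n_k+2}^{n} g_j^{-1} ≥ 2^{-sk} θ } satisfies sup_{j ≥ n_k} y_j ≤ 2^{-2sk} for every k ≥ 0. -/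
open scoped BigOperators ENNReal
open MeasureTheory Filter Set Topology

lemma aux_A (y w : ℕ → ℝ) (K q : ℝ) (hK : 0 ≤ K) (hq : 0 < q) (hq1 : q < 1) (p : ℕ) (Y : ℝ)
    (hY : y p ≤ Y) (hY0 : 0 ≤ Y) (hw : ∀ n, p ≤ n → 0 ≤ w n)
    (hrec : ∀ n, p ≤ n → y (n + 2) ≤ y n / (1 + w (n + 2)) + K * q ^ (n + 2)) (t : ℕ) :
    y (p + 2 * t) ≤ Y / (1 + ∑ r ∈ Finset.range t, w (p + 2 * r + 2))
      + K / (1 - q ^ 2) * q ^ p := by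
  have hq2 : 0 < 1 - q ^ 2 := by nlinarith
  set L := K / (1 - q ^ 2) with hL
  have hL0 : 0 ≤ L := by positivity
  have hLK : L * (1 - q ^ 2) = K := by rw [hL]; field_simp
  suffices h : y (p + 2 * t) ≤ Y / (1 + ∑ r ∈ Finset.range t, w (p + 2 * r + 2))
      + L * q ^ p * (1 - q ^ (2 * t)) by
    have : 0 ≤ L * q ^ p * q ^ (2 * t) := by positivity
    nlinarith
  induction t with
  | zero => simpa using hY
  | succ t ih =>
    have h1 := hrec (p + 2 * t) (by omega)
    have hw1 := hw (p + 2 * t + 2) (by omega)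
    rw [Finset.sum_range_succ]
    have hS : 0 ≤ ∑ r ∈ Finset.range t, w (p + 2 * r + 2) :=
      Finset.sum_nonneg fun r _ => hw _ (by omega)
    set S := ∑ r ∈ Finset.range t, w (p + 2 * r + 2)
    set W := w (p + 2 * t + 2)
    have e : p + 2 * (t + 1) = p + 2 * t + 2 := by ring
    rw [e]
    have hA : 0 ≤ L * q ^ p * (1 - q ^ (2 * t)) := by
      have : q ^ (2 * t) ≤ 1 := pow_le_one₀ hq.le hq1.le
      have : 0 ≤ 1 - q ^ (2 * t) := by linarith
      positivity
    have h2 : y (p + 2 * t) / (1 + W) ≤ Y / (1 + (S + W)) + L * q ^ p * (1 - q ^ (2 * t)) := by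
      calc _ ≤ (Y / (1 + S) + L * q ^ p * (1 - q ^ (2 * t))) / (1 + W) := by gcongr
        _ = Y / ((1 + S) * (1 + W)) + L * q ^ p * (1 - q ^ (2 * t)) / (1 + W) := by
          field_simp
        _ ≤ _ := by
          gcongr
          · nlinarith [mul_nonneg hS hw1]
          · exact div_le_self hA (by linarith)
    have h3 : K * q ^ (p + 2 * t + 2) ≤ L * q ^ p * (1 - q ^ (2 * (t + 1)))
        - L * q ^ p * (1 - q ^ (2 * t)) := by
      have : L * q ^ p * (1 - q ^ (2 * (t + 1))) - L * q ^ p * (1 - q ^ (2 * t))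
          = (L * (1 - q ^ 2)) * q ^ (p + 2 * t) := by ring
      rw [this, hLK]
      gcongr K * ?_
      exact pow_le_pow_of_le_one hq.le hq1.le (by omega)
    linarith

lemma aux_par (h : ℕ → ℝ) (hanti : ∀ n m : ℕ, 1 ≤ n → n ≤ m → h m ≤ h n) (p t : ℕ) :
    ∑ j ∈ Finset.Icc (p + 2) (p + 2 * t + 1), h j
      ≤ 2 * ∑ r ∈ Finset.range t, h (p + 2 * r + 2) := by
  induction t with
  | zero => simp
  | succ t ih =>
    have e : p + 2 * (t + 1) + 1 = p + 2 * t + 1 + 1 + 1 := by ring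
    rw [e, Finset.sum_Icc_succ_top (by omega), Finset.sum_Icc_succ_top (by omega),
      Finset.sum_range_succ]
    have := hanti (p + 2 * t + 2) (p + 2 * t + 1 + 1 + 1) (by omega) (by omega)
    have e2 : p + 2 * t + 1 + 1 = p + 2 * t + 2 := by ring
    rw [e2] at this ⊢
    linarith

lemma aux_div (h : ℕ → ℝ) (hpos : ∀ n, 1 ≤ n → 0 < h n)
    (hdiv : ¬ Summable fun n : ℕ => h (n + 1)) (N : ℕ) (A : ℝ) :
    ∃ n₁, N + 2 ≤ n₁ ∧ ∀ n, n₁ ≤ n → A ≤ ∑ j ∈ Finset.Icc (N + 2) n, h j := by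
  have hd : ¬ Summable fun n : ℕ => h (n + (N + 2)) := by
    intro H
    apply hdiv
    have := (summable_nat_add_iff (f := fun n => h (n + 1)) (N + 1)).1
      (by simpa [add_assoc] using H)
    exact this
  have ht := (not_summable_iff_tendsto_nat_atTop_of_nonneg
    (fun n => (hpos (n + (N + 2)) (by omega)).le)).1 hd
  obtain ⟨n₁, hn₁⟩ := (tendsto_atTop.1 ht A).exists_forall_of_atTop
  refine ⟨N + 2 + n₁, by omega, fun n hn => ?_⟩
  refine (hn₁ (n + 1 - (N + 2)) (by omega)).trans (le_of_eq ?_)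
  have : Finset.Icc (N + 2) n = Finset.Ico (N + 2) (n + 1) := by ext; simp
  rw [this, Finset.sum_Ico_eq_sum_range]
  exact Finset.sum_congr rfl fun i _ => by rw [add_comm]

lemma aux_main (y h : ℕ → ℝ) (hpos : ∀ n, 1 ≤ n → 0 < h n)
    (hanti : ∀ n m : ℕ, 1 ≤ n → n ≤ m → h m ≤ h n)
    (hdiv : ¬ Summable fun n : ℕ => h (n + 1)) (b K r : ℝ) (hb : 0 < b) (hK : 0 ≤ K)
    (hr : 0 < r) (hr1 : r < 1) (hy : ∀ n, 0 ≤ y n)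
    (hrec0 : ∀ n, 1 ≤ n → y (n + 2) ≤ y n + K * (r ^ 2) ^ (n + 2))
    (hrec : ∀ n v, 1 ≤ n → 0 < v → y (n + 1) ≤ v ^ 2 →
      y (n + 2) ≤ y n / (1 + h (n + 2) / (b * v)) + K * (r ^ 2) ^ (n + 2)) :
    ∃ n₀ : ℕ, 1 ≤ n₀ ∧ ∃ θ : ℝ, 0 < θ ∧
      ∀ nseq : ℕ → ℕ, nseq 0 = n₀ →
        (∀ k : ℕ, nseq (k + 1) = sInf {n : ℕ | nseq k + 2 ≤ n ∧
            r ^ k * θ ≤ ∑ j ∈ Finset.Icc (nseq k + 2) n, h j}) →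
        ∀ k : ℕ, ∀ j : ℕ, nseq k ≤ j → y j ≤ (r ^ 2) ^ k := by
  have hq : 0 < r ^ 2 := by positivity
  have hq1 : r ^ 2 < 1 := by nlinarith
  set q := r ^ 2 with hqdef
  set L := K / (1 - q ^ 2) with hL
  have hq2 : 0 < 1 - q ^ 2 := by nlinarith
  have hL0 : 0 ≤ L := by positivity
  -- monotone bound
  have hmono : ∀ p t, 1 ≤ p → y (p + 2 * t) ≤ y p + L * q ^ p := by
    intro p t hp
    have := aux_A y (fun _ => 0) K q hK hq hq1 p (y p) le_rfl (hy p) (fun _ _ => le_rfl)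
      (fun n hn => by simpa using hrec0 n (by omega)) t
    simpa using this
  -- contraction bound
  have hcon : ∀ N v Y, 1 ≤ N → 0 < v → 0 ≤ Y → (∀ j, N ≤ j → y j ≤ v ^ 2) →
      ∀ p t, N ≤ p → y p ≤ Y →
      y (p + 2 * t) ≤ Y / (1 + (∑ r ∈ Finset.range t, h (p + 2 * r + 2)) / (b * v))
        + L * q ^ p := by
    intro N v Y hN hv hY0 hj p t hp hyp
    have := aux_A y (fun n => h n / (b * v)) K q hK hq hq1 p Y hyp hY0
      (fun n hn => by have := hpos n (by omega); positivity)
      (fun n hn => hrec n v (by omega) hv (hj _ (by omega))) t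
    rwa [← Finset.sum_div] at this
  obtain ⟨B, hB0, hB⟩ : ∃ B : ℝ, 0 < B ∧ ∀ j, 1 ≤ j → y j ≤ B ^ 2 := by
    refine ⟨1 + y 1 + y 2 + L, by have := hy 1; have := hy 2; positivity, fun j hj => ?_⟩
    have h1 := hy 1
    have h2 := hy 2
    suffices y j ≤ 1 + y 1 + y 2 + L by nlinarith
    rcases Nat.even_or_odd' (j - 1) with ⟨t, ht | ht⟩
    · have := hmono 1 t le_rfl
      have e : j = 1 + 2 * t := by omega
      have : L * q ^ 1 ≤ L := mul_le_of_le_one_right hL0 (pow_le_one₀ hq.le hq1.le)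
      rw [e]; linarith
    · have := hmono 2 t (by omega)
      have e : j = 2 + 2 * t := by omega
      have : L * q ^ 2 ≤ L := mul_le_of_le_one_right hL0 (pow_le_one₀ hq.le hq1.le)
      rw [e]; linarith
  have hsmall : ∀ ε : ℝ, 0 < ε → ∃ p : ℕ, 1 ≤ p ∧ ∀ n, p ≤ n → L * q ^ n ≤ ε := by
    intro ε hε
    have ht : Tendsto (fun n : ℕ => L * q ^ n) atTop (𝓝 0) := by
      simpa using (tendsto_pow_atTop_nhds_zero_of_lt_one hq.le hq1).const_mul L
    obtain ⟨p, hp⟩ := ((ht.eventually (ge_mem_nhds hε))).exists_forall_of_atTop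
    exact ⟨p + 1, by omega, fun n hn => hp n (by omega)⟩
  -- eventually at most one
  have hone : ∃ p₁ : ℕ, 1 ≤ p₁ ∧ ∀ m, p₁ ≤ m → y m ≤ 1 := by
    obtain ⟨p, hp1, hp⟩ := hsmall (1 / 2) (by norm_num)
    have key : ∀ p', p ≤ p' → ∃ t₀, ∀ t, t₀ ≤ t → y (p' + 2 * t) ≤ 1 := by
      intro p' hp'
      obtain ⟨n₁, -, hn₁⟩ := aux_div h hpos hdiv p' (4 * B ^ 2 * (b * B))
      refine ⟨n₁, fun t ht => ?_⟩
      have h1 := hcon 1 B (B ^ 2) le_rfl hB0 (by positivity) hB p' t (by omega)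
        (hB _ (by omega))
      have h2 := hn₁ (p' + 2 * t + 1) (by omega)
      have h3 := aux_par h hanti p' t
      have h4 := hp p' hp'
      set S := ∑ r ∈ Finset.range t, h (p' + 2 * r + 2)
      have h5 : 2 * B ^ 2 ≤ S / (b * B) := by
        rw [le_div_iff₀ (by positivity)]; linarith
      have h6 : B ^ 2 / (1 + S / (b * B)) ≤ 1 / 2 := by
        rw [div_le_iff₀ (by nlinarith)]; linarith
      linarith
    obtain ⟨t₁, ht₁⟩ := key p le_rfl
    obtain ⟨t₂, ht₂⟩ := key (p + 1) (by omega)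
    refine ⟨p + 1 + 2 * (t₁ + t₂), by omega, fun m hm => ?_⟩
    rcases Nat.even_or_odd' (m - p) with ⟨t, ht | ht⟩
    · have e : m = p + 2 * t := by omega
      rw [e]; exact ht₁ t (by omega)
    · have e : m = p + 1 + 2 * t := by omega
      rw [e]; exact ht₂ t (by omega)
  obtain ⟨p₁, hp₁, hone⟩ := hone
  obtain ⟨p₂, hp₂, hsm⟩ := hsmall (q / 4) (by positivity)
  set θ := 8 * b / r ^ 5 + 2 * h 1 with hθ
  have hh1 := hpos 1 le_rfl
  have hθ0 : 0 < θ := by positivity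
  have hθb : 8 * b ≤ θ * r ^ 5 := by
    rw [hθ, add_mul, div_mul_cancel₀ _ (by positivity)]
    have : 0 ≤ 2 * h 1 * r ^ 5 := by positivity
    linarith
  have hθh : 2 * h 1 ≤ θ := by
    rw [hθ]; have : 0 ≤ 8 * b / r ^ 5 := by positivity
    linarith
  refine ⟨p₁ + p₂, by omega, θ, hθ0, fun nseq h0 hstep => ?_⟩
  have hmem : ∀ k, nseq k + 2 ≤ nseq (k + 1) ∧
      r ^ k * θ ≤ ∑ j ∈ Finset.Icc (nseq k + 2) (nseq (k + 1)), h j := by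
    intro k
    obtain ⟨n₁, h1, h2⟩ := aux_div h hpos hdiv (nseq k) (r ^ k * θ)
    have := Nat.sInf_mem (s := {n : ℕ | nseq k + 2 ≤ n ∧
            r ^ k * θ ≤ ∑ j ∈ Finset.Icc (nseq k + 2) n, h j}) ⟨n₁, h1, h2 n₁ le_rfl⟩
    rw [← hstep k] at this
    exact this
  have hgrow : ∀ k, p₁ + p₂ + 2 * k ≤ nseq k := by
    intro k
    induction k with
    | zero => omega
    | succ k ih => have := (hmem k).1; omega
  have hLq : ∀ k p, p₂ + k ≤ p → L * q ^ p ≤ q / 4 * q ^ k := by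
    intro k p hp
    have h1 := hsm (p - k) (by omega)
    have e : q ^ p = q ^ (p - k) * q ^ k := by rw [← pow_add]; congr 1; omega
    rw [e, ← mul_assoc]
    gcongr
  have hqk : ∀ k, q ^ k = (r ^ k) ^ 2 := fun k => by rw [hqdef]; ring
  intro k
  induction k using Nat.strong_induction_on with
  | _ k ih =>
  rcases k with _ | k
  · intro j hj
    simpa using hone j (by omega)
  intro m hm
  have ihk := ih k (by omega)
  have hg := hgrow k
  obtain ⟨hm1, hm2⟩ := hmem k
  have hrk : 0 < r ^ k := by positivity
  have hqkp : 0 < q ^ k := by positivity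
  -- general contraction finish
  have fin : ∀ p t, nseq k ≤ p → m = p + 2 * t →
      r ^ k * θ / 4 ≤ ∑ r ∈ Finset.range t, h (p + 2 * r + 2) → y m ≤ q ^ (k + 1) := by
    intro p t hp hmp hS
    have h1 := hcon (nseq k) (r ^ k) (q ^ k) (by omega) hrk (by positivity)
      (fun j hj => (ihk j hj).trans_eq (hqk k)) p t hp (ihk p hp)
    rw [← hmp] at h1
    have h2 := hLq k p (by omega)
    set S := ∑ r ∈ Finset.range t, h (p + 2 * r + 2)
    have h3 : 2 / q ≤ S / (b * r ^ k) := by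
      rw [div_le_div_iff₀ hq (by positivity)]
      have : 8 * b ≤ θ * q := by
        refine hθb.trans ?_
        gcongr
        exact pow_le_pow_of_le_one hr.le hr1.le (by norm_num)
      calc 2 * (b * r ^ k) = (8 * b) * r ^ k / 4 := by ring
        _ ≤ (θ * q) * r ^ k / 4 := by gcongr
        _ = (r ^ k * θ / 4) * q := by ring
        _ ≤ _ := by gcongr
    have h4 : q ^ k / (1 + S / (b * r ^ k)) ≤ q / 2 * q ^ k := by
      have h5 : 0 < 2 / q := by positivity
      calc _ ≤ q ^ k / (2 / q) := by gcongr; linarith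
        _ = _ := by field_simp
    rw [pow_succ]
    nlinarith
  rcases Nat.even_or_odd' (m - nseq k) with ⟨t, ht | ht⟩
  · have e : m = nseq k + 2 * t := by omega
    refine fin (nseq k) t le_rfl e ?_
    have h1 := aux_par h hanti (nseq k) t
    have h2 : ∑ j ∈ Finset.Icc (nseq k + 2) (nseq (k + 1)), h j ≤
        ∑ j ∈ Finset.Icc (nseq k + 2) (nseq k + 2 * t + 1), h j := by
      refine Finset.sum_le_sum_of_subset_of_nonneg
        (Finset.Icc_subset_Icc le_rfl (by omega)) fun i hi _ => (hpos i ?_).le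
      have := (Finset.mem_Icc.1 hi).1
      omega
    have : 0 < r ^ k * θ := by positivity
    linarith
  · have e : m = nseq k + 1 + 2 * t := by omega
    by_cases hbad : h (nseq k + 2) ≤ r ^ k * θ / 2
    · refine fin (nseq k + 1) t (by omega) e ?_
      have h1 := aux_par h hanti (nseq k + 1) t
      have h2 : ∑ j ∈ Finset.Icc (nseq k + 2) (nseq (k + 1)), h j ≤
          ∑ j ∈ Finset.Icc (nseq k + 2) (nseq k + 1 + 2 * t + 1), h j := by
        refine Finset.sum_le_sum_of_subset_of_nonneg
          (Finset.Icc_subset_Icc le_rfl (by omega)) fun i hi _ => (hpos i ?_).le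
        have := (Finset.mem_Icc.1 hi).1
        omega
      have h3 : ∑ j ∈ Finset.Icc (nseq k + 2) (nseq k + 1 + 2 * t + 1), h j =
          h (nseq k + 2) + ∑ j ∈ Finset.Icc (nseq k + 1 + 2) (nseq k + 1 + 2 * t + 1), h j := by
        rw [← Finset.insert_Icc_add_one_left_eq_Icc (by omega), Finset.sum_insert (by simp)]
        rfl
      linarith
    · push Not at hbad
      rcases k with _ | k
      · exfalso
        have := hanti 1 (nseq 0 + 2) le_rfl (by omega)
        simp at hbad
        linarith
      · have ihk' := ih k (by omega)
        have hg' := hgrow k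
        obtain ⟨hm1', -⟩ := hmem k
        have hrk' : 0 < r ^ k := by positivity
        obtain ⟨p, hp⟩ : ∃ p, nseq (k + 1) = p + 1 := ⟨nseq (k + 1) - 1, by omega⟩
        have h1 := hcon (nseq k) (r ^ k) (q ^ k) (by omega) hrk' (by positivity)
          (fun j hj => (ihk' j hj).trans_eq (hqk k)) p 1 (by omega) (ihk' p (by omega))
        simp only [Finset.sum_range_one, mul_one, mul_zero, add_zero] at h1
        have h2 := hLq (k + 1) p (by omega)
        have h3 := hmono (p + 2) t (by omega)
        have h4 := hLq (k + 1) (p + 2) (by omega)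
        have e' : m = p + 2 + 2 * t := by omega
        rw [e']
        have h5 := hanti (p + 2) (nseq (k + 1) + 2) (by omega) (by omega)
        have h6 : 4 / q ^ 2 ≤ h (p + 2) / (b * r ^ k) := by
          rw [div_le_div_iff₀ (by positivity) (by positivity)]
          calc 4 * (b * r ^ k) = (8 * b) * r ^ k / 2 := by ring
            _ ≤ (θ * r ^ 5) * r ^ k / 2 := by gcongr
            _ = (r ^ (k + 1) * θ / 2) * q ^ 2 := by rw [hqdef]; ring
            _ ≤ _ := by gcongr; linarith
        have h7 : q ^ k / (1 + h (p + 2) / (b * r ^ k)) ≤ q ^ 2 / 4 * q ^ k := by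
          have h5 : 0 < 4 / q ^ 2 := by positivity
          calc _ ≤ q ^ k / (4 / q ^ 2) := by gcongr; linarith
            _ = _ := by field_simp
        have e1 : q ^ (k + 1 + 1) = q ^ 2 * q ^ k := by ring
        have e2 : q / 4 * q ^ (k + 1) = q ^ 2 * q ^ k / 4 := by ring
        have e3 : 0 < q ^ 2 * q ^ k := by positivity
        rw [e2] at h2 h4
        rw [e1]
        linarith

lemma aux_tail (s : ℝ) (hs : 0 < s) (x : ℕ → ℝ) (hx : MemHs s x) :
    ∃ K : ℝ, 0 ≤ K ∧ ∀ n, 1 ≤ n → 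
      tail2 x n ≤ K * (((2 : ℝ) ^ (-s)) ^ 2) ^ n := by
  obtain ⟨K, hK⟩ : ∃ K, K = ∑' n : ℕ, (2 : ℝ) ^ (2 * s * ((n : ℝ) + 1)) * (x (n + 1)) ^ 2 :=
    ⟨_, rfl⟩
  have hnn : ∀ n : ℕ, 0 ≤ (2 : ℝ) ^ (2 * s * ((n : ℝ) + 1)) * (x (n + 1)) ^ 2 := fun n => by
    positivity
  refine ⟨K, hK ▸ tsum_nonneg hnn, fun n hn => ?_⟩
  obtain ⟨n, rfl⟩ : ∃ m, n = m + 1 := ⟨n - 1, by omega⟩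
  set f := fun n : ℕ => (2 : ℝ) ^ (2 * s * ((n : ℝ) + 1)) * (x (n + 1)) ^ 2 with hf
  have hfs : Summable f := hx
  have hsh : Summable fun i => f (i + n) := (summable_nat_add_iff n).2 hfs
  have hle : ∑' i, f (i + n) ≤ K := by
    rw [hK, ← hfs.sum_add_tsum_nat_add n]
    have : 0 ≤ ∑ i ∈ Finset.range n, f i := Finset.sum_nonneg fun i _ => hnn i
    linarith
  set Q := (((2 : ℝ) ^ (-s)) ^ 2) ^ (n + 1) with hQ
  have hQ0 : 0 ≤ Q := by positivity
  have hQe : Q = (2 : ℝ) ^ (-(2 * s * ((n : ℝ) + 1))) := by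
    rw [hQ, ← pow_mul, ← Real.rpow_natCast, ← Real.rpow_mul (by norm_num)]
    congr 1
    push_cast; ring
  have hterm : ∀ i, (x (n + 1 + i)) ^ 2 ≤ f (i + n) * Q := by
    intro i
    have e : f (i + n) * Q = (2 : ℝ) ^ (2 * s * i) * (x (n + 1 + i)) ^ 2 := by
      rw [hQe, hf]
      have e1 : i + n + 1 = n + 1 + i := by ring
      simp only [e1]
      rw [mul_right_comm, ← Real.rpow_add (by norm_num)]
      congr 2
      push_cast; ring
    rw [e]
    refine le_mul_of_one_le_left (sq_nonneg _) (Real.one_le_rpow (by norm_num) (by positivity))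
  have hs2 : Summable fun i => f (i + n) * Q := hsh.mul_right Q
  have hs1 : Summable fun i => (x (n + 1 + i)) ^ 2 :=
    Summable.of_nonneg_of_le (fun i => sq_nonneg _) hterm hs2
  calc tail2 x (n + 1) ≤ ∑' i, f (i + n) * Q := hs1.tsum_le_tsum hterm hs2
    _ = (∑' i, f (i + n)) * Q := tsum_mul_right
    _ ≤ K * Q := by gcongr

/-- Lemma 3.6: there are `n₀ ≥ 1` and `θ > 0` such that along the subsequence
`n_{k+1} = inf{n ≥ n_k + 2 : ∑_{j=n_k+2}^n gⱼ⁻¹ ≥ 2^{-sk}θ}` one has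
`sup_{j ≥ n_k} yⱼ ≤ 2^{-2sk}`. -/
theorem boundSeq_subsequence_decay
    (β : ℝ) (hβ : 0 < β) (φ g : ℕ → ℝ)
    (hφbdd : BddAbove (Set.range fun n : ℕ => |φ (n + 1)|))
    (hgpos : ∀ n : ℕ, 1 ≤ n → 0 < g n)
    (hgmono : ∀ n m : ℕ, 1 ≤ n → n ≤ m → g n ≤ g m)
    (hgdiv : ¬ Summable fun n : ℕ => (g (n + 1))⁻¹)
    (s : ℝ) (hs : 0 < s) (x : ℕ → ℝ) (hx : MemHs s x) :
    ∃ n₀ : ℕ, 1 ≤ n₀ ∧ ∃ θ : ℝ, 0 < θ ∧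
      ∀ nseq : ℕ → ℕ, nseq 0 = n₀ →
        (∀ k : ℕ, nseq (k + 1) = sInf {n : ℕ | nseq k + 2 ≤ n ∧
            (2 : ℝ) ^ (-s * (k : ℝ)) * θ ≤ ∑ j ∈ Finset.Icc (nseq k + 2) n, (g j)⁻¹}) →
        ∀ k : ℕ, ∀ j : ℕ, nseq k ≤ j →
          boundSeq (phiNorm φ) g x j ≤ (2 : ℝ) ^ (-(2 * s) * (k : ℝ)) := by
  obtain ⟨K, hK, hT⟩ := aux_tail s hs x hx
  set Φ := phiNorm φ with hΦ
  have hΦ0 : 0 ≤ Φ := Real.iSup_nonneg fun n => abs_nonneg _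
  have htail0 : ∀ n, 0 ≤ tail2 x n := fun n => tsum_nonneg fun i => sq_nonneg _
  have hr : (0 : ℝ) < 2 ^ (-s) := by positivity
  have hr1 : (2 : ℝ) ^ (-s) < 1 := Real.rpow_lt_one_of_one_lt_of_neg (by norm_num) (by linarith)
  have hC : ∀ n v, 1 ≤ n → 0 ≤ v → 0 ≤ Cfun Φ g n v ∧ Cfun Φ g n v ≤ 1 := by
    intro n v hn hv
    have := hgpos n hn
    have h0 : 0 ≤ g n * Φ * v / 2 := by positivity
    unfold Cfun
    exact ⟨by positivity, (div_le_one (by positivity)).2 (by linarith)⟩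
  have hy : ∀ n, 0 ≤ boundSeq Φ g x n := by
    intro n
    induction n using Nat.strong_induction_on with
    | _ n ih =>
    match n, ih with
    | 0, _ => simp [boundSeq]
    | 1, _ => have := htail0 1; simp only [boundSeq]; positivity
    | 2, _ => have := htail0 1; simp only [boundSeq]; positivity
    | n + 3, ih =>
      have h1 := ih (n + 1) (by omega)
      have h2 := htail0 (n + 3)
      have h3 := (hC (n + 3) _ (by omega) (Real.sqrt_nonneg (boundSeq Φ g x (n + 2)))).1
      simp only [boundSeq]; positivity
  have hrec : ∀ n, 1 ≤ n → boundSeq Φ g x (n + 2) =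
      Cfun Φ g (n + 2) (Real.sqrt (boundSeq Φ g x (n + 1))) * boundSeq Φ g x n
        + tail2 x (n + 2) := by
    intro n hn
    obtain ⟨n, rfl⟩ : ∃ m, n = m + 1 := ⟨n - 1, by omega⟩
    rw [boundSeq]
  obtain ⟨n₀, hn₀, θ, hθ, H⟩ := aux_main (boundSeq Φ g x) (fun n => (g n)⁻¹)
    (fun n hn => inv_pos.2 (hgpos n hn))
    (fun n m hn hm => inv_anti₀ (hgpos n hn) (hgmono n m hn hm)) hgdiv (Φ / 2 + 1) K
    ((2 : ℝ) ^ (-s)) (by positivity) hK hr hr1 hy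
    (by
      intro n hn
      rw [hrec n hn]
      have h1 := (hC (n + 2) _ (by omega) (Real.sqrt_nonneg (boundSeq Φ g x (n + 1)))).2
      exact add_le_add (mul_le_of_le_one_left (hy n) h1) (hT _ (by omega)))
    (by
      intro n v hn hv hyv
      rw [hrec n hn]
      refine add_le_add ?_ (hT _ (by omega))
      rw [div_eq_mul_inv, mul_comm]
      refine mul_le_mul_of_nonneg_left ?_ (hy n)
      have hsq : Real.sqrt (boundSeq Φ g x (n + 1)) ≤ v := Real.sqrt_le_iff.2 ⟨hv.le, hyv⟩
      have hs0 := Real.sqrt_nonneg (boundSeq Φ g x (n + 1))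
      have hg := hgpos (n + 2) (by omega)
      unfold Cfun
      set u := Real.sqrt (boundSeq Φ g x (n + 1))
      have e : (1 + (g (n + 2))⁻¹ / ((Φ / 2 + 1) * v))⁻¹
          = (g (n + 2) * (Φ / 2 + 1) * v) / (1 + g (n + 2) * (Φ / 2 + 1) * v) := by
        field_simp
        ring
      rw [e, div_le_div_iff₀ (by positivity) (by positivity)]
      have : g (n + 2) * Φ * u / 2 ≤ g (n + 2) * (Φ / 2 + 1) * v := by
        calc g (n + 2) * Φ * u / 2 = g (n + 2) * (Φ / 2) * u := by ring
          _ ≤ _ := by gcongr; linarith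
      linarith)
  refine ⟨n₀, hn₀, θ, hθ, fun nseq h0 hstep k j hj => ?_⟩
  have e1 : ∀ k : ℕ, (2 : ℝ) ^ (-s * (k : ℝ)) = ((2 : ℝ) ^ (-s)) ^ k := fun k => by
    rw [Real.rpow_mul (by norm_num), Real.rpow_natCast]
  have e2 : (2 : ℝ) ^ (-(2 * s) * (k : ℝ)) = (((2 : ℝ) ^ (-s)) ^ 2) ^ k := by
    rw [Real.rpow_mul (by norm_num), Real.rpow_natCast, ← Real.rpow_natCast _ 2,
      ← Real.rpow_mul (by norm_num)]
    congr 2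
    push_cast; ring
  rw [e2]
  refine H nseq h0 (fun k => ?_) k j hj
  rw [hstep k, e1 k]
end

section
/- Suppose g=(g_n)_{n≥1} is a positive non-decreasing sequence with ∑_{n≥1} g_n^{-1} = ∞. Let n_0 ≥ 1 be an integer and θ > 0, s > 0 reals, and define recursively n_{k+1} = inf{ n ≥ n_k+2 : ∑_{j=n_k+2}^{n} g_j^{-1} ≥ 2^{-sk} θ } (each n_{k+1} is finite). Then there exist infinitely many k ≥ 1 such that n_{k+1} = n_k + 2. -/
open scoped BigOperators ENNReal
open MeasureTheory Filter Set Topology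

/-- Lemma 3.7: there are infinitely many `k ≥ 1` with `n_{k+1} = n_k + 2`. -/
theorem subsequence_infinitely_many_consecutive
    (g : ℕ → ℝ)
    (hgpos : ∀ n : ℕ, 1 ≤ n → 0 < g n)
    (hgmono : ∀ n m : ℕ, 1 ≤ n → n ≤ m → g n ≤ g m)
    (hgdiv : ¬ Summable fun n : ℕ => (g (n + 1))⁻¹)
    (n₀ : ℕ) (hn₀ : 1 ≤ n₀) (θ s : ℝ) (hθ : 0 < θ) (hs : 0 < s)
    (nseq : ℕ → ℕ) (h0 : nseq 0 = n₀)
    (hrec : ∀ k : ℕ, nseq (k + 1) = sInf {n : ℕ | nseq k + 2 ≤ n ∧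
      (2 : ℝ) ^ (-s * (k : ℝ)) * θ ≤ ∑ j ∈ Finset.Icc (nseq k + 2) n, (g j)⁻¹}) :
    ∀ K : ℕ, ∃ k : ℕ, K ≤ k ∧ 1 ≤ k ∧ nseq (k + 1) = nseq k + 2 := by
  have hnn : ∀ n : ℕ, 0 ≤ (g (n + 1))⁻¹ := fun n => (inv_pos.2 (hgpos _ (by omega))).le
  have hT := (not_summable_iff_tendsto_nat_atTop_of_nonneg hnn).1 hgdiv
  obtain ⟨T, hTdef⟩ : ∃ T : ℕ → ℝ, T = fun n => ∑ i ∈ Finset.range n, (g (i + 1))⁻¹ := ⟨_, rfl⟩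
  rw [← hTdef] at hT
  have hTs : ∀ n, T (n + 1) = T n + (g (n + 1))⁻¹ := by
    intro n
    simp only [hTdef, Finset.sum_range_succ]
  have hTmono : Monotone T := monotone_nat_of_le_succ (fun n => by
    rw [hTs]; linarith [hnn n])
  have hsum : ∀ m d : ℕ, ∑ j ∈ Finset.Icc (m + 2) (m + 1 + d), (g j)⁻¹ = T (m + 1 + d) - T (m + 1) := by
    intro m d
    induction d with
    | zero => simp
    | succ d ih =>
      rw [← add_assoc, Finset.sum_Icc_succ_top (by omega), ih, hTs (m + 1 + d)]
      ring
  have hmem : ∀ k, nseq (k + 1) ∈ {n : ℕ | nseq k + 2 ≤ n ∧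
      (2 : ℝ) ^ (-s * (k : ℝ)) * θ ≤ ∑ j ∈ Finset.Icc (nseq k + 2) n, (g j)⁻¹} := by
    intro k
    rw [hrec k]
    apply Nat.sInf_mem
    obtain ⟨N, hN, hN2⟩ := ((hT.eventually_ge_atTop
      ((2 : ℝ) ^ (-s * (k : ℝ)) * θ + T (nseq k + 1))).and
      (eventually_ge_atTop (nseq k + 2))).exists
    refine ⟨N, hN2, ?_⟩
    obtain ⟨d, rfl⟩ := Nat.exists_eq_add_of_le (show nseq k + 1 ≤ N by omega)
    rw [hsum]
    linarith
  have hge : ∀ k, nseq k + 2 ≤ nseq (k + 1) := fun k => (hmem k).1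
  have hk : ∀ k, k ≤ nseq k := by
    intro k
    induction k with
    | zero => omega
    | succ k ih => have := hge k; omega
  intro K
  by_contra! hcon
  have hstep : ∀ k, K ≤ k → 1 ≤ k →
      T (nseq (k + 1) + 1) ≤ T (nseq k + 1) + 3 * ((2 : ℝ) ^ (-s * (k : ℝ)) * θ) := by
    intro k h1 h2
    have h3 : nseq k + 3 ≤ nseq (k + 1) := by
      have := hge k
      have := hcon k h1 h2
      omega
    obtain ⟨d, hd⟩ := Nat.exists_eq_add_of_le h3
    have hlt : nseq k + 1 + (d + 1) < nseq (k + 1) := by omega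
    have hnot := Nat.notMem_of_lt_sInf (lt_of_lt_of_eq hlt (hrec k))
    simp only [Set.mem_setOf_eq, not_and, not_le] at hnot
    have h4 := hnot (by omega)
    rw [hsum] at h4
    have e1 : nseq (k + 1) + 1 = (nseq k + 1 + (d + 1)) + 1 + 1 := by omega
    rw [e1, hTs, hTs]
    have h5 : T (nseq k + 1 + 1) ≤ T (nseq k + 1 + (d + 1)) := hTmono (by omega)
    rw [hTs] at h5
    have h6 : ∀ j, nseq k + 1 + 1 ≤ j → (g j)⁻¹ ≤ (g (nseq k + 1 + 1))⁻¹ := fun j hj =>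
      inv_anti₀ (hgpos _ (by omega)) (hgmono _ _ (by omega) hj)
    have h7 := h6 (nseq k + 1 + (d + 1) + 1) (by omega)
    have h8 := h6 (nseq k + 1 + (d + 1) + 1 + 1) (by omega)
    linarith
  have hε : ∀ k : ℕ, (2 : ℝ) ^ (-s * (k : ℝ)) * θ = ((2 : ℝ) ^ (-s)) ^ k * θ := by
    intro k
    rw [Real.rpow_mul (by norm_num), Real.rpow_natCast]
  have hr0 : (0 : ℝ) ≤ (2 : ℝ) ^ (-s) := by positivity
  have hr1 : (2 : ℝ) ^ (-s) < 1 :=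
    Real.rpow_lt_one_of_one_lt_of_neg (by norm_num) (by linarith)
  have hS : Summable fun k : ℕ => ((2 : ℝ) ^ (-s)) ^ k * θ :=
    (summable_geometric_of_lt_one hr0 hr1).mul_right θ
  have hind : ∀ d, T (nseq (K + 1 + d) + 1) ≤ T (nseq (K + 1) + 1) +
      3 * ∑ i ∈ Finset.range (K + 1 + d), ((2 : ℝ) ^ (-s)) ^ i * θ := by
    intro d
    induction d with
    | zero =>
      have : 0 ≤ ∑ i ∈ Finset.range (K + 1 + 0), ((2 : ℝ) ^ (-s)) ^ i * θ :=
        Finset.sum_nonneg (fun i _ => by positivity)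
      simp only [add_zero] at *
      linarith
    | succ d ih =>
      have := hstep (K + 1 + d) (by omega) (by omega)
      rw [hε] at this
      rw [← add_assoc, Finset.sum_range_succ]
      linarith
  obtain ⟨N, hN, hN2⟩ := ((hT.eventually_gt_atTop (T (nseq (K + 1) + 1) +
      3 * ∑' i : ℕ, ((2 : ℝ) ^ (-s)) ^ i * θ)).and (eventually_ge_atTop (K + 1))).exists
  obtain ⟨d, rfl⟩ := Nat.exists_eq_add_of_le hN2
  have h1 := hind d
  have h2 := hS.sum_le_tsum (Finset.range (K + 1 + d)) (fun i _ => by positivity)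
  have h3 : T (K + 1 + d) ≤ T (nseq (K + 1 + d) + 1) := hTmono (by have := hk (K + 1 + d); omega)
  linarith
end

section
/- Let x ∈ H^s for some s>0 and let y be the bounding sequence for x. Suppose that g_n is non-decreasing, that g_n 2^{-sn} is eventually non-increasing, and that ∑_{n≥1} g_n^{-1} = ∞. Then ∑_{n≥1} 2^{2sn} y_n < ∞. -/
open scoped BigOperators ENNReal
open MeasureTheory Filter Set Topology

lemma aux_geo (z t : ℕ → ℝ) (hz : ∀ n, 0 ≤ z n) (ht : ∀ n, 0 ≤ t n) (hts : Summable t)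
    (N : ℕ) (h : ∀ n, N ≤ n → z (n+2) ≤ 1/4 * z n + t (n+2)) : Summable z := by
  rw [← summable_nat_add_iff N]
  have hts' : Summable (fun n => t (n + 2 + N)) := by
    have := (summable_nat_add_iff (N+2)).2 hts
    refine this.congr fun n => by congr 1; ring
  have key : ∀ K, ∑ n ∈ Finset.range (K+2), z (n+N) ≤ z N + z (N+1)
      + 1/4 * ∑ n ∈ Finset.range K, z (n+N) + ∑ n ∈ Finset.range K, t (n+2+N) := by
    intro K
    induction K with
    | zero => simp [Finset.sum_range_succ, add_comm]
    | succ K ih =>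
      rw [Finset.sum_range_succ, Finset.sum_range_succ _ K, Finset.sum_range_succ _ K]
      have := h (K+N) (by omega)
      have e : K + N + 2 = K + 2 + N := by ring
      rw [e] at this
      linarith
  refine summable_of_sum_range_le (c := 4/3 * (z N + z (N+1) + ∑' n, t (n+2+N)))
    (fun n => hz _) fun K => ?_
  have h1 := key K
  have h2 : ∑ n ∈ Finset.range K, t (n+2+N) ≤ ∑' n, t (n+2+N) :=
    hts'.sum_le_tsum _ (fun _ _ => ht _)
  rw [Finset.sum_range_succ, Finset.sum_range_succ] at h1
  have := hz (K+N)
  have := hz (K+1+N)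
  linarith

lemma aux_final (R : ℝ) (hR : 1 < R) (y T : ℕ → ℝ) (hy : ∀ n, 0 ≤ y n) (hT : ∀ n, 0 ≤ T n)
    (hTs : Summable fun n => R^(2*n) * T n)
    (N : ℕ) (h : ∀ n, N ≤ n → y (n+2) ≤ 1/(4*R^4) * y n + T (n+2)) :
    Summable fun n => R^(2*n) * y n := by
  have hR0 : 0 < R := by linarith
  refine aux_geo _ (fun n => R^(2*n) * T n) (fun n => mul_nonneg (by positivity) (hy n))
    (fun n => mul_nonneg (by positivity) (hT n)) hTs N fun n hn => ?_
  calc R^(2*(n+2)) * y (n+2) ≤ R^(2*(n+2)) * (1/(4*R^4) * y n + T (n+2)) := by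
        gcongr; exact h n hn
    _ = _ := by field_simp; ring

lemma aux_C {u v : ℝ} (hu : 0 ≤ u) (h : u ≤ v) : u/(1+u) ≤ v/(1+v) := by
  rw [div_le_div_iff₀ (by linarith) (by linarith)]; nlinarith

set_option maxHeartbeats 1000000 in
lemma aux_core (R : ℝ) (hR : 1 < R) (y a T : ℕ → ℝ) (hy : ∀ n, 0 ≤ y n) (ha : ∀ n, 0 < a n)
    (hmono : Monotone a) (hT : ∀ n, 0 ≤ T n) (hTa : Antitone T)
    (hTs : Summable fun n => R^(2*n) * T n)
    (hag : ∃ N, ∀ n, N ≤ n → a (n+1) ≤ R * a n)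
    (hdiv : ¬ Summable fun n => (a n)⁻¹)
    (hrec : ∀ n, y (n+2) = (a (n+2) * √(y (n+1))) / (1 + a (n+2) * √(y (n+1))) * y n + T (n+2)) :
    Summable fun n => R^(2*n) * y n := by
  have hR0 : 0 < R := by linarith
  obtain ⟨N, hN⟩ := hag
  obtain ⟨M, hM⟩ : ∃ M : ℕ → ℝ, ∀ k, M k = max (y (2*k)) (y (2*k+1)) := ⟨_, fun _ => rfl⟩
  obtain ⟨m, hm⟩ : ∃ m : ℕ → ℝ, ∀ k, m k = √(M k) := ⟨_, fun _ => rfl⟩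
  obtain ⟨τ, hτ⟩ : ∃ τ : ℕ → ℝ, ∀ k, τ k = √(T (2*k+2)) := ⟨_, fun _ => rfl⟩
  obtain ⟨A, hA⟩ : ∃ A : ℕ → ℝ, ∀ k, A k = a (2*k+3) := ⟨_, fun _ => rfl⟩
  have hM0 : ∀ k, 0 ≤ M k := fun k => by rw [hM]; exact le_max_of_le_left (hy _)
  have hm0 : ∀ k, 0 ≤ m k := fun k => by rw [hm]; positivity
  have hτ0 : ∀ k, 0 ≤ τ k := fun k => by rw [hτ]; positivity
  have hA0 : ∀ k, 0 < A k := fun k => by rw [hA]; exact ha _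
  have hm2 : ∀ k, m k ^ 2 = M k := fun k => by rw [hm, Real.sq_sqrt (hM0 k)]
  have hτ2 : ∀ k, τ k ^ 2 = T (2*k+2) := fun k => by rw [hτ, Real.sq_sqrt (hT _)]
  have hye : ∀ k, y (2*k) ≤ M k := fun k => by rw [hM]; exact le_max_left _ _
  have hyo : ∀ k, y (2*k+1) ≤ M k := fun k => by rw [hM]; exact le_max_right _ _
  -- one step bounds
  have hq0 : ∀ k, 0 ≤ A k * (m k + τ k) := fun k =>
    mul_nonneg (hA0 k).le (add_nonneg (hm0 k) (hτ0 k))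
  obtain ⟨C, hC⟩ : ∃ C : ℕ → ℝ, ∀ k, C k = A k * (m k + τ k) / (1 + A k * (m k + τ k)) :=
    ⟨_, fun _ => rfl⟩
  have hC0 : ∀ k, 0 ≤ C k := fun k => by
    rw [hC]; exact div_nonneg (hq0 k) (by linarith [hq0 k])
  have hC1 : ∀ k, C k ≤ 1 := fun k => by
    rw [hC]; exact div_le_one_of_le₀ (by linarith) (by linarith [hq0 k])
  have he : ∀ k, y (2*k+2) ≤ C k * y (2*k) + τ k ^ 2 := by
    intro k
    rw [hrec, hτ2, hC]
    refine add_le_add (mul_le_mul_of_nonneg_right ?_ (hy _)) le_rfl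
    apply aux_C
    · exact mul_nonneg (ha _).le (Real.sqrt_nonneg _)
    rw [hA]
    have h1 : √(y (2*k+1)) ≤ m k + τ k := by
      have : √(y (2*k+1)) ≤ m k := by rw [hm]; exact Real.sqrt_le_sqrt (hyo k)
      linarith [hτ0 k]
    exact mul_le_mul (hmono (by omega)) h1 (Real.sqrt_nonneg _) (ha _).le
  have he' : ∀ k, y (2*k+2) ≤ m k ^ 2 + τ k ^ 2 := by
    intro k
    have := he k
    have h2 : C k * y (2*k) ≤ 1 * M k := mul_le_mul (hC1 k) (hye k) (hy _) zero_le_one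
    rw [hm2]; linarith
  have ho' : ∀ k, y (2*k+3) ≤ C k * y (2*k+1) + T (2*k+3) := by
    intro k
    rw [hrec (2*k+1), hC]
    refine add_le_add (mul_le_mul_of_nonneg_right ?_ (hy _)) le_rfl
    apply aux_C
    · exact mul_nonneg (ha _).le (Real.sqrt_nonneg _)
    rw [hA]
    have h1 : √(y (2*k+1+1)) ≤ m k + τ k := by
      rw [Real.sqrt_le_iff]
      refine ⟨add_nonneg (hm0 k) (hτ0 k), (he' k).trans ?_⟩
      nlinarith [mul_nonneg (hm0 k) (hτ0 k)]
    exact mul_le_mul (hmono (by omega)) h1 (Real.sqrt_nonneg _) (ha _).le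
  have ho : ∀ k, y (2*k+3) ≤ C k * y (2*k+1) + τ k ^ 2 := by
    intro k
    have hTT : T (2*k+3) ≤ T (2*k+2) := hTa (by omega)
    rw [hτ2]
    linarith [ho' k]
  have hstep : ∀ k c, 0 ≤ c → C k ≤ c^2 → m (k+1) ≤ c * m k + τ k := by
    intro k c hc hCc
    rw [hm, Real.sqrt_le_iff]
    have hcm := mul_nonneg hc (hm0 k)
    refine ⟨add_nonneg hcm (hτ0 k), ?_⟩
    have h3 : C k * M k + τ k^2 ≤ (c * m k + τ k)^2 := by
      have : C k * M k ≤ c^2 * m k^2 := by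
        rw [hm2]; exact mul_le_mul_of_nonneg_right hCc (hM0 k)
      nlinarith [mul_nonneg hcm (hτ0 k)]
    refine le_trans ?_ h3
    rw [hM (k+1)]
    refine max_le ?_ ?_
    · exact (he k).trans (by gcongr; exacts [hC0 k, hye k])
    · exact (ho k).trans (by gcongr; exacts [hC0 k, hyo k])
  -- A growth
  have hAg : ∀ k, N ≤ k → A (k+1) ≤ R^2 * A k := by
    intro k hk
    rw [hA, hA]
    have h1 := hN (2*k+3) (by omega)
    have h2 := hN (2*k+4) (by omega)
    calc a (2*(k+1)+3) ≤ R * a (2*k+4) := h2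
      _ ≤ R * (R * a (2*k+3)) := by gcongr
      _ = _ := by ring
  have haB : ∃ B, 0 < B ∧ ∀ n, N ≤ n → a n ≤ B * R^n := by
    refine ⟨a N / R^N, div_pos (ha _) (by positivity), fun n hn => ?_⟩
    induction n, hn using Nat.le_induction with
    | base => rw [div_mul_cancel₀ _ (by positivity)]
    | succ n hn ih =>
      calc a (n+1) ≤ R * a n := hN n hn
        _ ≤ R * (a N / R^N * R^n) := by gcongr
        _ = _ := by ring
  obtain ⟨B, hB, hBa⟩ := haB
  have hRτ : Tendsto (fun k => R^(2*k+2) * τ k) atTop (𝓝 0) := by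
    have h1 := hTs.tendsto_atTop_zero
    have h2 : Tendsto (fun k : ℕ => 2*k+2) atTop atTop :=
      tendsto_atTop_mono (fun k => by simp only [id]; omega) tendsto_id
    have h3 := (h1.comp h2).sqrt
    rw [Real.sqrt_zero] at h3
    refine h3.congr fun k => ?_
    simp only [Function.comp]
    rw [Real.sqrt_mul (by positivity), hτ, mul_comm 2 (2*k+2), pow_mul, Real.sqrt_sq (by positivity)]
  have hτs : Summable τ := by
    have hgeo : Summable fun k : ℕ => (1/R)^k :=
      summable_geometric_of_lt_one (by positivity) (by rw [div_lt_one hR0]; exact hR)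
    refine summable_of_isBigO_nat hgeo ?_
    refine Asymptotics.IsBigO.of_bound 1 ?_
    filter_upwards [hRτ.eventually (gt_mem_nhds zero_lt_one)] with k hk
    rw [Real.norm_of_nonneg (hτ0 k), Real.norm_of_nonneg (by positivity), one_mul, one_div_pow,
      le_div_iff₀ (by positivity), mul_comm]
    refine le_trans ?_ hk.le
    gcongr
    · exact hτ0 k
    · exact hR.le
    · omega
  have hAτ : Tendsto (fun k => A k * τ k) atTop (𝓝 0) := by
    have h1 := hRτ.const_mul (B*R)
    rw [mul_zero] at h1
    refine squeeze_zero' (Eventually.of_forall fun k => mul_nonneg (hA0 k).le (hτ0 k)) ?_ h1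
    filter_upwards [eventually_ge_atTop N] with k hk
    calc A k * τ k ≤ (B * R^(2*k+3)) * τ k := by
          gcongr
          · exact hτ0 k
          · rw [hA]; exact hBa _ (by omega)
      _ = _ := by ring
  obtain ⟨δ, hδ⟩ : ∃ δ : ℝ, δ = 1/(4*R^4) := ⟨_, rfl⟩
  have hδ0 : 0 < δ := by rw [hδ]; positivity
  have hCle : ∀ k, A k * (m k + τ k) < δ → C k ≤ δ := by
    intro k hk
    rw [hC]
    exact (div_le_self (hq0 k) (by linarith [hq0 k])).trans hk.le
  obtain ⟨K, hK⟩ : ∃ K, ∀ k, K ≤ k → A k * τ k ≤ δ / (8*R^2) :=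
    eventually_atTop.1 ((hAτ.eventually (gt_mem_nhds (show (0:ℝ) < δ/(8*R^2) by positivity))).mono
      fun _ h => h.le)
  -- exists a good k
  obtain ⟨k₀, hk₀, hgood⟩ : ∃ k, max N K ≤ k ∧ A k * (m k + τ k) < δ := by
    by_contra! hbad
    obtain ⟨L, hL⟩ : ∃ L, L = max N K := ⟨_, rfl⟩
    rw [← hL] at hbad
    obtain ⟨κ, hκ⟩ : ∃ κ, κ = δ/(1+δ)/2 := ⟨_, rfl⟩
    have hκ0 : 0 < κ := by rw [hκ]; positivity
    have hdec : ∀ k, L ≤ k → m (k+1) ≤ m k + 2 * τ k - κ * (A k)⁻¹ := by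
      intro k hk
      have hb := hbad k hk
      have hp : 0 < 1 + A k * (m k + τ k) := by linarith
      obtain ⟨e, he⟩ : ∃ e, e = 1/(1 + A k * (m k + τ k)) := ⟨_, rfl⟩
      have he0 : 0 ≤ e := by rw [he]; positivity
      have he1 : e ≤ 1 := by rw [he, div_le_one hp]; linarith
      have hCe : C k = 1 - e := by rw [hC, he]; field_simp; ring
      have h1 := hstep k (1 - e/2) (by linarith) (by rw [hCe]; nlinarith)
      have h2 : κ * (A k)⁻¹ ≤ e/2 * (m k + τ k) := by
        have h3 := aux_C hδ0.le hb
        have h4 : e/2 * (m k + τ k) = (A k * (m k + τ k) / (1 + A k * (m k + τ k)))/2 * (A k)⁻¹ := by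
          have := hA0 k
          rw [he]; field_simp
        rw [h4, hκ]
        have := hA0 k
        gcongr
      nlinarith [hτ0 k, mul_nonneg he0 (hτ0 k), mul_le_mul_of_nonneg_right he1 (hτ0 k)]
    have hsumA : Summable fun k => (A (k+L))⁻¹ := by
      have hτs' := (summable_nat_add_iff L).2 hτs
      have hpart : ∀ n, m (n+L) + κ * ∑ k ∈ Finset.range n, (A (k+L))⁻¹
          ≤ m L + 2 * ∑ k ∈ Finset.range n, τ (k+L) := by
        intro n
        induction n with
        | zero => simp
        | succ n ih =>
          rw [Finset.sum_range_succ, Finset.sum_range_succ]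
          have := hdec (n+L) (by omega)
          rw [show n+1+L = n+L+1 by ring]
          linarith
      refine summable_of_sum_range_le (c := (m L + 2 * ∑' k, τ (k+L))/κ)
        (fun k => (inv_pos.2 (hA0 _)).le) fun n => ?_
      rw [le_div_iff₀ hκ0, mul_comm]
      have h1 := hpart n
      have h2 := hτs'.sum_le_tsum (Finset.range n) (fun _ _ => hτ0 _)
      linarith [hm0 (n+L)]
    have hsA := (summable_nat_add_iff (f := fun k => (A k)⁻¹) L).1 hsumA
    apply hdiv
    rw [← summable_nat_add_iff 3]
    have hev : Summable fun k => (fun n => (a (n+3))⁻¹) (2*k) := by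
      refine hsA.congr fun k => by rw [hA]
    have hod : Summable fun k => (fun n => (a (n+3))⁻¹) (2*k+1) := by
      refine hev.of_nonneg_of_le (fun k => (inv_pos.2 (ha _)).le) fun k => ?_
      exact inv_anti₀ (ha _) (hmono (by omega))
    exact (HasSum.even_add_odd hev.hasSum hod.hasSum).summable
  have hall : ∀ k, k₀ ≤ k → A k * (m k + τ k) < δ := by
    intro k hk
    induction k, hk using Nat.le_induction with
    | base => exact hgood
    | succ k hk ih =>
      have hkN : N ≤ k := (le_max_left _ _).trans (hk₀.trans hk)
      have hkK : K ≤ k := (le_max_right _ _).trans (hk₀.trans hk)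
      have h1 := hstep k (1/(2*R^2)) (by positivity) (by
        refine (hCle k ih).trans (le_of_eq ?_)
        rw [hδ]; field_simp; norm_num)
      have h2 := hAg k hkN
      have h3 := hK k hkK
      have h4 := hK (k+1) (by omega)
      have h5 : A (k+1) * m (k+1) ≤ R^2 * A k * (1/(2*R^2) * m k + τ k) :=
        mul_le_mul h2 h1 (hm0 _) (mul_nonneg (by positivity) (hA0 k).le)
      have h6 : R^2 * A k * (1/(2*R^2) * m k + τ k) = 1/2 * (A k * m k) + R^2 * (A k * τ k) := by
        field_simp
      have h7 : R^2 * (A k * τ k) ≤ δ/8 := by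
        calc _ ≤ R^2 * (δ/(8*R^2)) := by gcongr
          _ = _ := by field_simp
      have h8 : δ/(8*R^2) ≤ δ/8 := by
        apply div_le_div_of_nonneg_left hδ0.le (by norm_num)
        nlinarith
      have h9 := mul_nonneg (hA0 k).le (hτ0 k)
      rw [mul_add] at ih ⊢
      linarith
  refine aux_final R hR y T hy hT hTs (2*k₀) fun n hn => ?_
  rw [← hδ]
  have hs' : ∀ k, k₀ ≤ k → C k ≤ δ := fun k hk => hCle k (hall k hk)
  obtain ⟨k, rfl | rfl⟩ := Nat.even_or_odd' n
  · have h1 := he k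
    rw [hτ2] at h1
    exact h1.trans (add_le_add (mul_le_mul_of_nonneg_right (hs' k (by omega)) (hy _)) le_rfl)
  · have h1 := ho' k
    exact h1.trans (add_le_add (mul_le_mul_of_nonneg_right (hs' k (by omega)) (hy _)) le_rfl)


lemma aux_tail_s11 (R : ℝ) (hR : 1 < R) (f : ℕ → ℝ) (hf : ∀ n, 0 ≤ f n)
    (h : Summable fun n => R^n * f n) : Summable f ∧ Summable fun n => R^n * ∑' i, f (n+i) := by
  have hR0 : 0 < R := by linarith
  have hfs : Summable f := by
    refine h.of_nonneg_of_le hf fun n => ?_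
    exact le_mul_of_one_le_left (hf n) (one_le_pow₀ hR.le)
  refine ⟨hfs, ?_⟩
  have hgeo : Summable fun k : ℕ => (1/R)^k :=
      summable_geometric_of_lt_one (by positivity) (by rw [div_lt_one hR0]; exact hR)
  have hprod : Summable fun p : ℕ × ℕ => R^p.2 * f (p.2+p.1) := by
    have e : ∀ i n, R^n * f (n+i) = (1/R)^i * (R^(n+i) * f (n+i)) := by
      intro i n; rw [pow_add, one_div_pow]; field_simp
    have hi : ∀ i, Summable fun n => R^n * f (n+i) := by
      intro i
      simp_rw [e i]
      exact ((summable_nat_add_iff i).2 h).mul_left _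
    rw [summable_prod_of_nonneg (fun p => mul_nonneg (by positivity) (hf _))]
    refine ⟨hi, ?_⟩
    refine (hgeo.mul_right (∑' n, R^n * f n)).of_nonneg_of_le
      (fun i => tsum_nonneg fun n => mul_nonneg (by positivity) (hf _)) fun i => ?_
    simp_rw [e i]
    rw [tsum_mul_left]
    refine mul_le_mul_of_nonneg_left ?_ (by positivity)
    have := h.sum_add_tsum_nat_add i
    have h0 : 0 ≤ ∑ n ∈ Finset.range i, R^n * f n :=
      Finset.sum_nonneg fun n _ => mul_nonneg (by positivity) (hf _)
    linarith
  have := hprod.prod_symm.prod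
  refine this.congr fun n => ?_
  simp [tsum_mul_left]

/-- Lemma 3.5: `∑_{n≥1} 2^{2sn} yₙ < ∞` for the bounding sequence `y` of `x ∈ Hˢ`. -/
theorem boundSeq_summable
    (β : ℝ) (hβ : 0 < β) (φ g : ℕ → ℝ)
    (hφbdd : BddAbove (Set.range fun n : ℕ => |φ (n + 1)|))
    (hgpos : ∀ n : ℕ, 1 ≤ n → 0 < g n)
    (s : ℝ) (hs : 0 < s) (x : ℕ → ℝ) (hx : MemHs s x)
    (hgmono : ∀ n m : ℕ, 1 ≤ n → n ≤ m → g n ≤ g m)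
    (hgs : ∃ N : ℕ, ∀ n m : ℕ, N ≤ n → n ≤ m →
      g m * (2 : ℝ) ^ (-s * (m : ℝ)) ≤ g n * (2 : ℝ) ^ (-s * (n : ℝ)))
    (hgdiv : ¬ Summable fun n : ℕ => (g (n + 1))⁻¹) :
    Summable (fun n : ℕ =>
      (2 : ℝ) ^ (2 * s * ((n : ℝ) + 1)) * boundSeq (phiNorm φ) g x (n + 1)) := by
  have hR : (1:ℝ) < (2:ℝ)^s := Real.one_lt_rpow (by norm_num) hs
  obtain ⟨R, hRdef⟩ : ∃ R : ℝ, R = (2:ℝ)^s := ⟨_, rfl⟩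
  rw [← hRdef] at hR
  have hR0 : 0 < R := by linarith
  have hpow : ∀ n : ℕ, (2:ℝ) ^ (2 * s * ((n : ℝ) + 1)) = R^2 * R^(2*n) := by
    intro n
    rw [hRdef, ← Real.rpow_mul_natCast (by norm_num), ← Real.rpow_mul_natCast (by norm_num),
      ← Real.rpow_add (by norm_num)]
    congr 1; push_cast; ring
  have hpow' : ∀ n : ℕ, (2:ℝ) ^ (-s * (n : ℝ)) = (R^n)⁻¹ := by
    intro n
    rw [neg_mul, Real.rpow_neg (by norm_num), Real.rpow_mul_natCast (by norm_num), hRdef]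
  obtain ⟨Φ, hΦ⟩ : ∃ Φ, Φ = phiNorm φ := ⟨_, rfl⟩
  rw [← hΦ]
  have hΦ0 : 0 ≤ Φ := by
    rw [hΦ]; exact Real.iSup_nonneg fun n => abs_nonneg _
  have hx' : Summable fun n => (R^2)^n * x (n+1)^2 := by
    unfold MemHs at hx
    simp_rw [hpow, mul_assoc] at hx
    rw [summable_mul_left_iff (by positivity)] at hx
    exact hx.congr fun n => by rw [pow_mul]
  obtain ⟨hxs, hTs⟩ := aux_tail_s11 (R^2) (one_lt_pow₀ hR (by norm_num)) (fun n => x (n+1)^2)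
    (fun n => sq_nonneg _) hx'
  have hTe : ∀ n, tail2 x (n+1) = ∑' i, x (n+i+1)^2 := by
    intro n; unfold tail2; congr 1; ext i; congr 2; ring
  have hT0 : ∀ n, 0 ≤ tail2 x n := fun n => tsum_nonneg fun i => sq_nonneg _
  have hTa : Antitone fun n => tail2 x (n+1) := by
    refine antitone_nat_of_succ_le fun n => ?_
    have h1 : Summable fun i => x (n+i+1)^2 := by
      refine ((summable_nat_add_iff n).2 hxs).congr fun i => ?_
      simp only [add_comm i n]
    rw [hTe, hTe, h1.tsum_eq_zero_add]
    have e : ∀ i, n + 1 + i + 1 = n + (i+1) + 1 := fun i => by ring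
    simp_rw [e]
    linarith [sq_nonneg (x (n+0+1))]
  have hTs' : Summable fun n => R^(2*n) * tail2 x (n+1) := by
    refine hTs.congr fun n => ?_
    rw [hTe, pow_mul]
  have hrec : ∀ n, boundSeq Φ g x (n+3) =
      Cfun Φ g (n + 3) (Real.sqrt (boundSeq Φ g x (n + 2))) * boundSeq Φ g x (n + 1)
        + tail2 x (n + 3) := fun n => by rw [boundSeq]
  have hy2 : ∀ n, 0 ≤ boundSeq Φ g x (n+1) ∧ 0 ≤ boundSeq Φ g x (n+2) := by
    intro n
    induction n with
    | zero => simp only [boundSeq]; constructor <;> linarith [hT0 1]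
    | succ n ih =>
      refine ⟨ih.2, ?_⟩
      rw [show n + 1 + 2 = n + 3 by ring, hrec]
      have h1 : 0 ≤ g (n+3) * Φ * √(boundSeq Φ g x (n+2)) / 2 := by
        have := hgpos (n+3) (by omega)
        positivity
      have h2 : 0 ≤ Cfun Φ g (n + 3) (Real.sqrt (boundSeq Φ g x (n + 2))) :=
        div_nonneg h1 (by linarith)
      exact add_nonneg (mul_nonneg h2 ih.1) (hT0 _)
  have hy : ∀ n, 0 ≤ boundSeq Φ g x (n+1) := fun n => (hy2 n).1
  simp_rw [hpow, mul_assoc]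
  apply Summable.mul_left
  rcases hΦ0.eq_or_lt with h0 | hpos
  · refine aux_final R hR _ (fun n => tail2 x (n+1)) hy (fun n => hT0 _) hTs' 0 fun n _ => ?_
    rw [show n + 2 + 1 = n + 3 by ring, hrec]
    have h1 : Cfun Φ g (n + 3) (Real.sqrt (boundSeq Φ g x (n + 2))) = 0 := by
      simp [Cfun, ← h0]
    rw [h1, zero_mul]
    have := mul_nonneg (show 0 ≤ 1/(4*R^4) by positivity) (hy n)
    linarith
  · refine aux_core R hR (fun n => boundSeq Φ g x (n+1)) (fun n => g (n+1) * Φ / 2)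
      (fun n => tail2 x (n+1)) hy (fun n => ?_) (fun n m hnm => ?_) (fun n => hT0 _) hTa hTs'
      ?_ ?_ (fun n => ?_)
    · have := hgpos (n+1) (by omega)
      positivity
    · have := hgmono (n+1) (m+1) (by omega) (by omega)
      simp only
      gcongr
    · obtain ⟨N, hN⟩ := hgs
      refine ⟨N, fun n hn => ?_⟩
      have h1 := hN (n+1) (n+2) (by omega) (by omega)
      rw [hpow', hpow', ← div_eq_mul_inv, ← div_eq_mul_inv,
        div_le_div_iff₀ (by positivity) (by positivity)] at h1
      have h2 : g (n+2) ≤ R * g (n+1) := by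
        have hp : 0 < R^(n+1) := by positivity
        refine le_of_mul_le_mul_right ?_ hp
        calc _ ≤ _ := h1
          _ = _ := by ring
      rw [show n + 1 + 1 = n + 2 by ring]
      calc g (n+2) * Φ / 2 ≤ (R * g (n+1)) * Φ / 2 := by gcongr
        _ = _ := by ring
    · intro hsum
      apply hgdiv
      refine (hsum.mul_left (Φ/2)).congr fun n => ?_
      have := hgpos (n+1) (by omega)
      field_simp
    ·
      rw [show n + 2 + 1 = n + 3 by ring, show n + 1 + 1 = n + 2 by ring, hrec, Cfun,
        show g (n+3) * Φ * √(boundSeq Φ g x (n+2)) / 2 = g (n+3) * Φ / 2 * √(boundSeq Φ g x (n+2)) by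
          ring]
end

section
/- Let x ∈ H^s for some s>0 and let y be the bounding sequence for x. Suppose that g_n is non-decreasing, that g_n 2^{-sn} is eventually non-increasing, and that ∑_{n≥1} g_n^{-1} = ∞. Then the coefficients c_n := C_n(y_{n-1}^{1/2}) = (1 + 1/((1/2) g_n ‖φ‖_{ℓ^∞} y_{n-1}^{1/2}))^{-1} tend to 0 as n → ∞. -/
open scoped BigOperators ENNReal
open MeasureTheory Filter Set Topology

lemma bs_root (r2 r e c q : ℝ) (hr : 0 ≤ r) (he : 0 ≤ e) (hq : 0 ≤ q)
    (hc : c ≤ q ^ 2) (h : r2 ^ 2 = c * r ^ 2 + e ^ 2) : r2 ≤ q * r + e := by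
  refine le_of_abs_le (abs_le_of_sq_le_sq ?_ (by positivity))
  have h1 : c * r ^ 2 ≤ q ^ 2 * r ^ 2 := by gcongr
  have h2 : 0 ≤ q * r * e := by positivity
  nlinarith

lemma bs_abstract (h r e : ℕ → ℝ) (A : ℝ) (hA : 1 ≤ A)
    (hpos : ∀ n, 0 < h n) (hmono : Monotone h)
    (N0 : ℕ) (hgrow : ∀ n, N0 ≤ n → h (n + 1) ≤ A * h n)
    (he : ∀ n, 0 ≤ e n) (hes : Summable e)
    (hhe : Tendsto (fun n => h (n + 2) * e n) atTop (𝓝 0))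
    (hdiv : ¬ Summable fun n => (h n)⁻¹)
    (hr : ∀ n, 0 ≤ r n)
    (hrec : ∀ n, r (n + 2) ^ 2 =
      (h (n + 2) * r (n + 1)) / (1 + h (n + 2) * r (n + 1)) * r n ^ 2 + e n ^ 2) :
    Tendsto (fun n => h (n + 1) * r n) atTop (𝓝 0) := by
  have ha : ∀ n, 0 ≤ h (n + 2) * r (n + 1) := fun n => mul_nonneg (hpos _).le (hr _)
  set t : ℕ → ℝ := fun n => r n / (1 + h (n + 2) * r (n + 1)) with ht
  have ht0 : ∀ n, 0 ≤ t n := fun n => div_nonneg (hr n) (by linarith [ha n])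
  have hstep : ∀ n, t n / 2 ≤ r n - r (n + 2) + e n := by
    intro n
    have h1 := ha n
    have hp : 0 < 1 + h (n + 2) * r (n + 1) := by linarith
    have := bs_root (r (n + 2)) (r n) (e n) _ (1 - 1 / (1 + h (n + 2) * r (n + 1)) / 2)
      (hr n) (he n) (by
        have : 1 / (1 + h (n + 2) * r (n + 1)) ≤ 1 := by
          rw [div_le_one hp]; linarith
        linarith) (by
        have : h (n + 2) * r (n + 1) / (1 + h (n + 2) * r (n + 1))
          = 1 - 1 / (1 + h (n + 2) * r (n + 1)) := by field_simp; ring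
        rw [this]
        nlinarith [sq_nonneg (1 / (1 + h (n + 2) * r (n + 1)))]) (hrec n)
    have h3 : t n = 1 / (1 + h (n + 2) * r (n + 1)) * r n := by rw [ht]; ring
    rw [h3]; linarith
  have hr2 : ∀ n, r (n + 2) ≤ r n + e n := fun n => by linarith [hstep n, ht0 n]
  have htsum : Summable t := by
    have key : ∀ n, ∑ i ∈ Finset.range n, t i / 2 ≤
        r 0 + r 1 - r n - r (n + 1) + ∑ i ∈ Finset.range n, e i := by
      intro n
      induction n with
      | zero => simp
      | succ k ih =>
        rw [Finset.sum_range_succ, Finset.sum_range_succ]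
        have := hstep k
        have e1 : k + 1 + 1 = k + 2 := rfl
        rw [e1]; linarith
    have h2 : Summable (fun i => t i / 2) := by
      apply summable_of_sum_range_le (c := r 0 + r 1 + ∑' i, e i)
      · intro n; have := ht0 n; positivity
      · intro n
        have := hes.sum_le_tsum (Finset.range n) (fun i _ => he i)
        linarith [key n, hr n, hr (n + 1)]
    have := h2.mul_left 2
    refine this.congr ?_
    intro n; ring
  have hε : Tendsto (fun n => A * (h (n + 2) * e n)) atTop (𝓝 0) := by
    simpa using hhe.const_mul A
  have hh3 : ∀ n, N0 ≤ n → h (n + 3) * e n ≤ A * (h (n + 2) * e n) := by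
    intro n hn
    have := hgrow (n + 2) (by omega)
    rw [← mul_assoc]
    exact mul_le_mul_of_nonneg_right this (he n)
  -- arbitrarily late small pairs
  have hsmall : ∀ η > 0, ∀ N, ∃ n ≥ N, h (n + 1) * r n ≤ η ∧ h (n + 2) * r (n + 1) ≤ η := by
    intro η hη N
    by_contra hcon
    push Not at hcon
    obtain ⟨N1, hN1⟩ := eventually_atTop.1 (hε.eventually (ge_mem_nhds (show (0:ℝ) < 1 by norm_num)))
    apply hdiv
    have hS : Summable (fun n => (t n + t (n + 1)) * ((2 + η) / η)) :=
      (htsum.add ((summable_nat_add_iff 1).2 htsum)).mul_right _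
    set M := N + N0 + N1 with hM
    have hS' := (summable_nat_add_iff M).2 hS
    rw [← summable_nat_add_iff (M + 3)]
    refine Summable.of_nonneg_of_le (fun n => (inv_pos.2 (hpos _)).le) ?_ hS'
    intro k
    have hidx : k + (M + 3) = (k + M) + 3 := by ring
    rw [hidx]
    obtain ⟨n, hn⟩ : ∃ n, n = k + M := ⟨_, rfl⟩
    simp only [← hn]
    have hkey : ∀ p T : ℝ, 0 ≤ p → η < h (n + 3) * p → p / (2 + h (n + 3) * p) ≤ T →
        (h (n + 3))⁻¹ ≤ T * ((2 + η) / η) := by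
      intro p T hp hz hT
      have hpp := hpos (n + 3)
      refine le_trans ?_ (mul_le_mul_of_nonneg_right hT (by positivity))
      rw [inv_eq_one_div, div_mul_div_comm, div_le_div_iff₀ hpp (by positivity)]
      nlinarith
    have hm12 : h (n + 1) ≤ h (n + 3) := hmono (by omega)
    have hm23 : h (n + 2) ≤ h (n + 3) := hmono (by omega)
    have hp3 := hpos (n + 3)
    rcases le_total (r (n + 1)) (r n) with hc | hc
    · apply hkey (r n) _ (hr n)
      · by_contra hlt
        push Not at hlt
        have h1 : h (n + 1) * r n ≤ η := le_trans (mul_le_mul_of_nonneg_right hm12 (hr n)) hlt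
        have h2 := hcon n (by omega) h1
        have h3 : h (n + 2) * r (n + 1) ≤ h (n + 3) * r n :=
          mul_le_mul hm23 hc (hr _) hp3.le
        linarith
      · have h3 : h (n + 2) * r (n + 1) ≤ h (n + 3) * r n :=
          mul_le_mul hm23 hc (hr _) hp3.le
        have : r n / (2 + h (n + 3) * r n) ≤ t n := by
          apply div_le_div_of_nonneg_left (hr n) (by linarith [ha n]) (by linarith)
        linarith [ht0 (n + 1)]
    · apply hkey (r (n + 1)) _ (hr _)
      · by_contra hlt
        push Not at hlt
        have h1 : h (n + 1) * r n ≤ η :=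
          le_trans (mul_le_mul hm12 hc (hr n) hp3.le) hlt
        have h2 := hcon n (by omega) h1
        have h3 : h (n + 2) * r (n + 1) ≤ h (n + 3) * r (n + 1) :=
          mul_le_mul_of_nonneg_right hm23 (hr _)
        linarith
      · have h3 : h (n + 3) * r (n + 2) ≤ h (n + 3) * (r (n + 1) + e n) :=
          mul_le_mul_of_nonneg_left (by linarith [hr2 n]) hp3.le
        have h4 := hh3 n (by omega)
        have h5 := hN1 n (by omega)
        have : r (n + 1) / (2 + h (n + 3) * r (n + 1)) ≤ t (n + 1) := by
          apply div_le_div_of_nonneg_left (hr _)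
          · have := ha (n + 1)
            linarith
          · have e1 : h (n + 1 + 2) * r (n + 1 + 1) = h (n + 3) * r (n + 2) := rfl
            rw [e1]; linarith
        linarith [ht0 n]
  have hδ : (0:ℝ) < (1 / (2 * A ^ 2)) ^ 2 := by positivity
  -- persistence
  have hpers : ∀ η > 0, η ≤ (1 / (2 * A ^ 2)) ^ 2 → ∃ n, ∀ m ≥ n, h (m + 1) * r m ≤ η := by
    intro η hη hηδ
    obtain ⟨N1, hN1⟩ := eventually_atTop.1
      (hε.eventually (ge_mem_nhds (show (0:ℝ) < η / 2 by positivity)))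
    obtain ⟨n, hn, hn1, hn2⟩ := hsmall η hη (N0 + N1)
    refine ⟨n, ?_⟩
    have : ∀ k, h (n + k + 1) * r (n + k) ≤ η ∧ h (n + k + 2) * r (n + k + 1) ≤ η := by
      intro k
      induction k with
      | zero => exact ⟨hn1, hn2⟩
      | succ k ih =>
        obtain ⟨i1, i2⟩ := ih
        refine ⟨i2, ?_⟩
        obtain ⟨m, hm⟩ : ∃ m, m = n + k := ⟨_, rfl⟩
        have e1 : n + (k + 1) = m + 1 := by omega
        rw [e1]
        rw [← hm] at i1 i2
        change h (m + 3) * r (m + 2) ≤ η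
        have hc : h (m + 2) * r (m + 1) / (1 + h (m + 2) * r (m + 1)) ≤ (1 / (2 * A ^ 2)) ^ 2 :=
          le_trans (div_le_self (ha m) (by linarith [ha m])) (le_trans i2 hηδ)
        have h1 := bs_root _ _ _ _ (1 / (2 * A ^ 2)) (hr m) (he m) (by positivity) hc (hrec m)
        have h2 : h (m + 3) ≤ A ^ 2 * h (m + 1) := by
          have g1 := hgrow (m + 1) (by omega)
          have g2 := hgrow (m + 2) (by omega)
          have e2 : m + 1 + 1 = m + 2 := rfl
          have e3 : m + 2 + 1 = m + 3 := rfl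
          rw [e2] at g1; rw [e3] at g2
          nlinarith
        have h3 := hh3 m (by omega)
        have h4 := hN1 m (by omega)
        calc h (m + 3) * r (m + 2) ≤ h (m + 3) * (1 / (2 * A ^ 2) * r m + e m) :=
              mul_le_mul_of_nonneg_left h1 (hpos _).le
          _ = h (m + 3) * (1 / (2 * A ^ 2) * r m) + h (m + 3) * e m := by ring
          _ ≤ (A ^ 2 * h (m + 1)) * (1 / (2 * A ^ 2) * r m) + η / 2 := by
              have := hr m
              gcongr
              linarith
          _ = h (m + 1) * r m / 2 + η / 2 := by
              field_simp
          _ ≤ η := by linarith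
    intro m hm
    obtain ⟨k, rfl⟩ := Nat.exists_eq_add_of_le hm
    exact (this k).1
  rw [Metric.tendsto_atTop]
  intro ε hε0
  obtain ⟨n, hn⟩ := hpers (min (ε / 2) ((1 / (2 * A ^ 2)) ^ 2)) (lt_min (by positivity) hδ)
    (min_le_right _ _)
  refine ⟨n, fun m hm => ?_⟩
  rw [Real.dist_eq, sub_zero, abs_of_nonneg (mul_nonneg (hpos _).le (hr _))]
  have := hn m hm
  have := min_le_left (ε / 2) ((1 / (2 * A ^ 2)) ^ 2)
  linarith

lemma bs_tail (s : ℝ) (hs : 0 < s) (x : ℕ → ℝ) (hx : MemHs s x) :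
    Tendsto (fun n : ℕ => (2 : ℝ) ^ (s * ((n : ℝ) + 1)) * Real.sqrt (tail2 x (n + 1)))
      atTop (𝓝 0) := by
  unfold MemHs at hx
  set f : ℕ → ℝ := fun n : ℕ => (2 : ℝ) ^ (2 * s * ((n : ℝ) + 1)) * (x (n + 1)) ^ 2 with hf
  have h0 := tendsto_sum_nat_add f
  have h1 : Tendsto (fun n => Real.sqrt (∑' k, f (k + n))) atTop (𝓝 0) := by
    simpa using h0.sqrt
  refine squeeze_zero (fun n => by positivity) (fun n => ?_) h1
  apply Real.le_sqrt_of_sq_le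
  have hT : 0 ≤ tail2 x (n + 1) := tsum_nonneg fun i => sq_nonneg _
  rw [mul_pow, Real.sq_sqrt hT, ← Real.rpow_natCast, ← Real.rpow_mul (by norm_num), tail2,
    ← tsum_mul_left]
  have hle : ∀ i, (2 : ℝ) ^ (s * ((n : ℝ) + 1) * ((2 : ℕ) : ℝ)) * x (n + 1 + i) ^ 2 ≤ f (i + n) := by
    intro i
    have e1 : n + 1 + i = i + n + 1 := by omega
    rw [hf, e1]
    apply mul_le_mul_of_nonneg_right _ (sq_nonneg _)
    apply Real.rpow_le_rpow_of_exponent_le (by norm_num)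
    push_cast
    nlinarith [mul_nonneg hs.le (Nat.cast_nonneg (α := ℝ) i)]
  have hsum := (summable_nat_add_iff n).2 hx
  exact (Summable.of_nonneg_of_le (fun i => by positivity) hle hsum).tsum_le_tsum hle hsum

/-- The coefficients `cₙ = Cₙ(√y_{n-1})` tend to `0` as `n → ∞`
(stated for `n ≥ 3`, i.e. along `n = m + 3`). -/
theorem boundSeq_coefficients_tendsto_zero
    (β : ℝ) (hβ : 0 < β) (φ g : ℕ → ℝ)
    (hφbdd : BddAbove (Set.range fun n : ℕ => |φ (n + 1)|))
    (hgpos : ∀ n : ℕ, 1 ≤ n → 0 < g n)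
    (s : ℝ) (hs : 0 < s) (x : ℕ → ℝ) (hx : MemHs s x)
    (hgmono : ∀ n m : ℕ, 1 ≤ n → n ≤ m → g n ≤ g m)
    (hgs : ∃ N : ℕ, ∀ n m : ℕ, N ≤ n → n ≤ m →
      g m * (2 : ℝ) ^ (-s * (m : ℝ)) ≤ g n * (2 : ℝ) ^ (-s * (n : ℝ)))
    (hgdiv : ¬ Summable fun n : ℕ => (g (n + 1))⁻¹) :
    Filter.Tendsto
      (fun n : ℕ =>
        Cfun (phiNorm φ) g (n + 3) (Real.sqrt (boundSeq (phiNorm φ) g x (n + 2))))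
      Filter.atTop (nhds 0) := by
  have hK0 : 0 ≤ phiNorm φ := Real.iSup_nonneg fun n => abs_nonneg _
  rcases hK0.eq_or_lt with hK | hK
  · rw [← hK]; simp [Cfun]
  set Φ := phiNorm φ with hΦ
  have hT0 : ∀ n, 0 ≤ tail2 x n := fun n => tsum_nonneg fun i => sq_nonneg _
  have hy0 : ∀ n, 0 ≤ boundSeq Φ g x (n + 1) := by
    intro n
    induction n using Nat.strong_induction_on with
    | _ n ih =>
      match n, ih with
      | 0, _ => simp only [boundSeq]; linarith [hT0 1]
      | 1, _ => simp only [boundSeq]; linarith [hT0 1]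
      | n + 2, ih =>
        have h1 := ih n (by omega)
        have h3 := hgpos (n + 3) (by omega)
        rw [show n + 2 + 1 = n + 3 from rfl, boundSeq]
        have := hT0 (n + 3)
        unfold Cfun
        positivity
  obtain ⟨N, hN⟩ := hgs
  have htail := bs_tail s hs x hx
  have hp2 : ∀ z : ℝ, (0 : ℝ) < 2 ^ z := fun z => Real.rpow_pos_of_pos (by norm_num) z
  have htail3 := htail.comp (tendsto_add_atTop_nat 2)
  have hsplit : ∀ z : ℝ, (2 : ℝ) ^ (-s * z) * 2 ^ (s * z) = 1 := by
    intro z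
    rw [← Real.rpow_add (by norm_num)]
    simp
  have main := bs_abstract (fun n => Φ / 2 * g (n + 1)) (fun n => Real.sqrt (boundSeq Φ g x (n + 1)))
    (fun n => Real.sqrt (tail2 x (n + 3))) (2 ^ s)
    (Real.one_le_rpow (by norm_num) hs.le)
    (fun n => by have := hgpos (n + 1) (by omega); positivity)
    (fun a b hab => mul_le_mul_of_nonneg_left (hgmono _ _ (by omega) (by omega)) (by positivity))
    N ?_ (fun n => Real.sqrt_nonneg _) ?_ ?_ ?_ (fun n => Real.sqrt_nonneg _) ?_
  · have h2 := main.comp (tendsto_add_atTop_nat 1)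
    refine squeeze_zero (fun n => ?_) (fun n => ?_) h2
    · have := hgpos (n + 3) (by omega)
      unfold Cfun; positivity
    · have := hgpos (n + 3) (by omega)
      unfold Cfun
      have hz : 0 ≤ g (n + 3) * Φ * Real.sqrt (boundSeq Φ g x (n + 2)) / 2 := by positivity
      refine (div_le_self hz (by linarith)).trans (le_of_eq ?_)
      simp only [Function.comp]
      ring_nf
  · intro n hn
    have h1 := hN (n + 1) (n + 1 + 1) (by omega) (by omega)
    have e1 : (2 : ℝ) ^ (-s * ((n + 1 : ℕ) : ℝ)) = 2 ^ s * 2 ^ (-s * ((n + 1 + 1 : ℕ) : ℝ)) := by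
      rw [← Real.rpow_add (by norm_num)]
      congr 1; push_cast; ring
    rw [e1, ← mul_assoc] at h1
    have h2 := le_of_mul_le_mul_right h1 (hp2 _)
    calc Φ / 2 * g (n + 1 + 1) ≤ Φ / 2 * (g (n + 1) * 2 ^ s) := by gcongr
      _ = _ := by ring
  · -- summable
    obtain ⟨B, hB⟩ := htail3.bddAbove_range
    have hgeo : Summable (fun n : ℕ => B * ((2 : ℝ) ^ (-s)) ^ n) :=
      (summable_geometric_of_lt_one (hp2 _).le
        (Real.rpow_lt_one_of_one_lt_of_neg (by norm_num) (by linarith))).mul_left _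
    refine Summable.of_nonneg_of_le (fun n => Real.sqrt_nonneg _) (fun n => ?_) hgeo
    have h1 := hB ⟨n, rfl⟩
    simp only [Function.comp] at h1
    have e1 : ((2 : ℝ) ^ (-s)) ^ n = 2 ^ (-s * (n : ℝ)) := by
      rw [← Real.rpow_natCast, ← Real.rpow_mul (by norm_num)]
    have h2 : (2 : ℝ) ^ (s * (n : ℝ)) * Real.sqrt (tail2 x (n + 3)) ≤ B := by
      refine le_trans (mul_le_mul_of_nonneg_right ?_ (Real.sqrt_nonneg _)) h1
      apply Real.rpow_le_rpow_of_exponent_le (by norm_num)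
      push_cast; nlinarith
    rw [e1]
    calc Real.sqrt (tail2 x (n + 3))
        = (2 : ℝ) ^ (-s * (n : ℝ)) * 2 ^ (s * (n : ℝ)) * Real.sqrt (tail2 x (n + 3)) := by
          rw [hsplit, one_mul]
      _ = ((2 : ℝ) ^ (s * (n : ℝ)) * Real.sqrt (tail2 x (n + 3))) * 2 ^ (-s * (n : ℝ)) := by ring
      _ ≤ _ := mul_le_mul_of_nonneg_right h2 (hp2 _).le
  · -- h e to 0
    have h4 := htail3.const_mul (Φ / 2 * (g N * (2 : ℝ) ^ (-s * (N : ℝ))))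
    rw [mul_zero] at h4
    refine squeeze_zero' (Eventually.of_forall fun n => ?_) ?_ h4
    · have := hgpos (n + 3) (by omega)
      show 0 ≤ Φ / 2 * g (n + 3) * _
      positivity
    · filter_upwards [eventually_ge_atTop N] with n hn
      have h1 := hN N (n + 3) le_rfl (by omega)
      simp only [Function.comp]
      have e0 : ((n + 2 : ℕ) : ℝ) + 1 = ((n + 3 : ℕ) : ℝ) := by push_cast; ring
      rw [e0]
      change Φ / 2 * g (n + 3) * Real.sqrt (tail2 x (n + 3)) ≤
        Φ / 2 * (g N * (2 : ℝ) ^ (-s * (N : ℝ))) *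
          ((2 : ℝ) ^ (s * ((n + 3 : ℕ) : ℝ)) * Real.sqrt (tail2 x (n + 3)))
      calc Φ / 2 * g (n + 3) * Real.sqrt (tail2 x (n + 3))
          = Φ / 2 * g (n + 3) * ((2 : ℝ) ^ (-s * ((n + 3 : ℕ) : ℝ)) * 2 ^ (s * ((n + 3 : ℕ) : ℝ)))
            * Real.sqrt (tail2 x (n + 3)) := by rw [hsplit, mul_one]
        _ = Φ / 2 * (g (n + 3) * (2 : ℝ) ^ (-s * ((n + 3 : ℕ) : ℝ))) *
          ((2 : ℝ) ^ (s * ((n + 3 : ℕ) : ℝ)) * Real.sqrt (tail2 x (n + 3))) := by ring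
        _ ≤ _ := by
          have := hp2 (s * ((n + 3 : ℕ) : ℝ))
          apply mul_le_mul_of_nonneg_right _ (by positivity)
          exact mul_le_mul_of_nonneg_left h1 (by positivity)
  · intro hS
    apply hgdiv
    refine (hS.mul_left (Φ / 2)).congr fun n => ?_
    have := hgpos (n + 1) (by omega)
    field_simp
  · intro n
    have h3 := hgpos (n + 3) (by omega)
    rw [Real.sq_sqrt (hy0 _), Real.sq_sqrt (hy0 _), Real.sq_sqrt (hT0 _)]
    rw [show n + 2 + 1 = n + 3 from rfl, boundSeq, Cfun]
    have e1 : g (n + 3) * Φ * Real.sqrt (boundSeq Φ g x (n + 2)) / 2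
      = Φ / 2 * g (n + 3) * Real.sqrt (boundSeq Φ g x (n + 2)) := by ring
    rw [e1]
end

section
/- Assume that n·g_n/k_n → 0 as n → ∞. If x ∈ ℓ² and Z is the solution of the linear system Z_n'(t) = −(k_n/g_n) Z_n(t), Z_n(0) = x_n (explicitly Z_n(t) = x_n exp(−(k_n/g_n) t)), then for every ε>0 and every s>0, Z ∈ L^∞([ε,∞); H^s), i.e. sup_{t≥ε} ∑_{n≥1} 2^{2sn} Z_n(t)² < ∞. -/
open scoped BigOperators ENNReal
open MeasureTheory Filter Set Topology

/-- Smoothing for the linear semigroup: if `n·gₙ/kₙ → 0` and `x ∈ ℓ²`, then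
`Zₙ(t) = xₙ e^{-(kₙ/gₙ)t}` belongs to `L^∞([ε,∞); Hˢ)` for all `ε, s > 0`. -/
theorem linear_semigroup_smoothing
    (β : ℝ) (hβ : 0 < β) (g : ℕ → ℝ)
    (hgpos : ∀ n : ℕ, 1 ≤ n → 0 < g n)
    (hgmono : ∀ n m : ℕ, 1 ≤ n → n ≤ m → g n ≤ g m)
    (hkg : ∃ N : ℕ, ∀ n m : ℕ, N ≤ n → n ≤ m → kk β n / g n ≤ kk β m / g m)
    (hng : Filter.Tendsto (fun n : ℕ => (n : ℝ) * g n / kk β n) Filter.atTop (nhds 0))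
    (x : ℕ → ℝ) (hx : Summable fun n : ℕ => (x (n + 1)) ^ 2) :
    ∀ ε : ℝ, 0 < ε → ∀ s : ℝ, 0 < s → ∃ M : ℝ, ∀ t : ℝ, ε ≤ t →
      Summable (fun n : ℕ => (2 : ℝ) ^ (2 * s * ((n : ℝ) + 1))
        * (x (n + 1) * Real.exp (-(kk β (n + 1) / g (n + 1)) * t)) ^ 2) ∧
      (∑' n : ℕ, (2 : ℝ) ^ (2 * s * ((n : ℝ) + 1))
        * (x (n + 1) * Real.exp (-(kk β (n + 1) / g (n + 1)) * t)) ^ 2) ≤ M := by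
  intro ε hε s hs
  have hkpos : ∀ n : ℕ, 0 < kk β n := fun n => Real.rpow_pos_of_pos (by norm_num) _
  obtain ⟨N, hN⟩ := Filter.eventually_atTop.1 (hng.eventually (gt_mem_nhds (div_pos hε hs)))
  set C : ℝ := (2 : ℝ) ^ (2 * s * ((N : ℝ) + 1)) with hC
  have hC1 : 1 ≤ C := Real.one_le_rpow (by norm_num) (by positivity)
  have key : ∀ t : ℝ, ε ≤ t → ∀ n : ℕ, (2 : ℝ) ^ (2 * s * ((n : ℝ) + 1))
        * (x (n + 1) * Real.exp (-(kk β (n + 1) / g (n + 1)) * t)) ^ 2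
        ≤ C * (x (n + 1)) ^ 2 := by
    intro t ht n
    have hg := hgpos (n + 1) (by omega)
    have hk := hkpos (n + 1)
    have hr : 0 < kk β (n + 1) / g (n + 1) := div_pos hk hg
    have hexp : (Real.exp (-(kk β (n + 1) / g (n + 1)) * t)) ^ 2
        = Real.exp (-(2 * (kk β (n + 1) / g (n + 1) * t))) := by
      rw [← Real.exp_nat_mul]
      congr 1
      push_cast
      ring
    have hc : (2 : ℝ) ^ (2 * s * ((n : ℝ) + 1))
        * (Real.exp (-(kk β (n + 1) / g (n + 1)) * t)) ^ 2 ≤ C := by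
      rw [hexp]
      have ht0 : 0 < t := lt_of_lt_of_le hε ht
      rcases le_total N (n + 1) with h | h
      · have h1 := hN (n + 1) h
        have h2 : s * ((n : ℝ) + 1) ≤ kk β (n + 1) / g (n + 1) * ε := by
          rw [div_lt_div_iff₀ hk hs] at h1
          rw [div_mul_eq_mul_div, le_div_iff₀ hg]
          push_cast at h1
          linarith
        have h3 : kk β (n + 1) / g (n + 1) * ε ≤ kk β (n + 1) / g (n + 1) * t :=
          mul_le_mul_of_nonneg_left ht hr.le
        refine le_trans ?_ hC1
        rw [Real.rpow_def_of_pos (by norm_num), ← Real.exp_add, Real.exp_le_one_iff]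
        have hl : Real.log 2 ≤ 1 := by linarith [Real.log_two_lt_d9]
        have h4 : Real.log 2 * (2 * s * ((n : ℝ) + 1)) ≤ 1 * (2 * s * ((n : ℝ) + 1)) :=
          mul_le_mul_of_nonneg_right hl (by positivity)
        linarith
      · have h1 : (2 : ℝ) ^ (2 * s * ((n : ℝ) + 1)) ≤ C := by
          apply Real.rpow_le_rpow_of_exponent_le (by norm_num)
          have : ((n : ℝ) + 1) ≤ N := by exact_mod_cast h
          apply mul_le_mul_of_nonneg_left _ (by positivity)
          linarith
        have h2 : Real.exp (-(2 * (kk β (n + 1) / g (n + 1) * t))) ≤ 1 := by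
          rw [Real.exp_le_one_iff]
          have := mul_pos hr ht0
          linarith
        calc _ ≤ C * 1 := mul_le_mul h1 h2 (Real.exp_pos _).le (by linarith)
          _ = C := mul_one C
    calc _ = ((2 : ℝ) ^ (2 * s * ((n : ℝ) + 1))
        * (Real.exp (-(kk β (n + 1) / g (n + 1)) * t)) ^ 2) * (x (n + 1)) ^ 2 := by ring
      _ ≤ _ := mul_le_mul_of_nonneg_right hc (sq_nonneg _)
  refine ⟨∑' n : ℕ, C * (x (n + 1)) ^ 2, fun t ht => ?_⟩
  have hs2 : Summable fun n : ℕ => C * (x (n + 1)) ^ 2 := hx.mul_left C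
  have hs1 := Summable.of_nonneg_of_le (fun n => by positivity) (key t ht) hs2
  exact ⟨hs1, hs1.tsum_le_tsum (key t ht) hs2⟩
end

section
/- Suppose that g_n is non-decreasing, k_n/g_n is eventually non-decreasing, ∑_{n≥1} g_n^{-1} = ∞, and additionally n·g_n/k_n → 0 as n → ∞. If s > β and X is a weak solution of the dyadic model with X(0) ∈ H^s and X ∈ L^∞([0,T]; H^s), then X ∈ L^∞_loc((0,T]; H^{s'}) for every s' > 0, i.e. for every ε ∈ (0,T) and every s' > 0, sup_{t∈[ε,T]} ∑_{n≥1} 2^{2s'n} X_n(t)² < ∞. -/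
open scoped BigOperators ENNReal
open MeasureTheory Filter Set Topology

/-- `X ∈ L^∞(I; Hˢ)`. -/
def MemLinftyHs (s : ℝ) (X : ℕ → ℝ → ℝ) (I : Set ℝ) : Prop :=
  ∃ M : ℝ, ∀ t ∈ I,
    Summable (fun n : ℕ => (2 : ℝ) ^ (2 * s * ((n : ℝ) + 1)) * (X (n + 1) t) ^ 2) ∧
    (∑' n : ℕ, (2 : ℝ) ^ (2 * s * ((n : ℝ) + 1)) * (X (n + 1) t) ^ 2) ≤ M

theorem aux_ode (f h c : ℝ → ℝ) (a T μ H : ℝ) (hμ : 0 < μ)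
    (hf : ∀ t ∈ Icc a T, HasDerivAt f (h t - c t * f t) t)
    (hh : ∀ t ∈ Icc a T, |h t| ≤ H) (hc : ∀ t ∈ Icc a T, μ ≤ c t) :
    ∀ t ∈ Icc a T, f t ^ 2 ≤ f a ^ 2 * Real.exp (-(μ * (t - a))) + H ^ 2 / μ ^ 2 := by
  intro t ht
  have hd : ∀ r ∈ Icc a T, HasDerivAt
      (fun r => Real.exp (μ * (r - a)) * (f r ^ 2 - H ^ 2 / μ ^ 2))
      (Real.exp (μ * (r - a)) * μ * (f r ^ 2 - H ^ 2 / μ ^ 2)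
        + Real.exp (μ * (r - a)) * (2 * f r * (h r - c r * f r))) r := by
    intro r hr
    have h1 : HasDerivAt (fun r => Real.exp (μ * (r - a))) (Real.exp (μ * (r - a)) * μ) r := by
      have := (((hasDerivAt_id r).sub_const a).const_mul μ).exp
      simpa using this
    have h2 : HasDerivAt (fun r => f r ^ 2 - H ^ 2 / μ ^ 2) (2 * f r * (h r - c r * f r)) r := by
      have := ((hf r hr).pow 2).sub_const (H ^ 2 / μ ^ 2)
      simpa using this
    exact h1.mul h2
  have hanti : AntitoneOn (fun r => Real.exp (μ * (r - a)) * (f r ^ 2 - H ^ 2 / μ ^ 2))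
      (Icc a T) := by
    apply antitoneOn_of_deriv_nonpos (convex_Icc a T)
    · exact fun r hr => (hd r hr).continuousAt.continuousWithinAt
    · exact fun r hr => (hd r (interior_subset hr)).differentiableAt.differentiableWithinAt
    · intro r hr
      have hr := interior_subset hr
      rw [(hd r hr).deriv]
      have e := Real.exp_pos (μ * (r - a))
      have key : μ * (f r ^ 2 - H ^ 2 / μ ^ 2) + 2 * f r * (h r - c r * f r) ≤ 0 := by
        have h3 : μ * (H ^ 2 / μ ^ 2) = H ^ 2 / μ := by field_simp
        have h4 : c r * f r ^ 2 ≥ μ * f r ^ 2 :=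
          mul_le_mul_of_nonneg_right (hc r hr) (sq_nonneg _)
        have h5 : 2 * f r * h r ≤ μ * f r ^ 2 + H ^ 2 / μ := by
          have h6 : h r ^ 2 ≤ H ^ 2 := sq_le_sq' (abs_le.1 (hh r hr)).1 (abs_le.1 (hh r hr)).2
          have h7 : 0 ≤ (μ * f r - h r) ^ 2 / μ := by positivity
          have h8 : (μ * f r - h r) ^ 2 / μ = μ * f r ^ 2 - 2 * f r * h r + h r ^ 2 / μ := by
            field_simp
            ring
          have h9 : h r ^ 2 / μ ≤ H ^ 2 / μ := by gcongr
          linarith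
        nlinarith
      nlinarith
  have haT : a ∈ Icc a T := ⟨le_refl _, ht.1.trans ht.2⟩
  have h1 := hanti haT ht ht.1
  simp only [sub_self, mul_zero, Real.exp_zero, one_mul] at h1
  have e := Real.exp_pos (μ * (t - a))
  rw [Real.exp_neg]
  have h2 : f t ^ 2 - H ^ 2 / μ ^ 2 ≤ (f a ^ 2 - H ^ 2 / μ ^ 2) / Real.exp (μ * (t - a)) := by
    rw [le_div_iff₀ e]; linarith
  have h3 : (f a ^ 2 - H ^ 2 / μ ^ 2) / Real.exp (μ * (t - a))
      ≤ f a ^ 2 / Real.exp (μ * (t - a)) := by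
    have : 0 ≤ H ^ 2 / μ ^ 2 := by positivity
    gcongr; linarith
  rw [← div_eq_mul_inv]
  linarith

theorem aux_step
    (β : ℝ) (hβ : 0 < β) (φ g : ℕ → ℝ) (Φ : ℝ) (hφ : ∀ n : ℕ, |φ n| ≤ Φ)
    (hgpos : ∀ n : ℕ, 1 ≤ n → 0 < g n)
    (hng : Filter.Tendsto (fun n : ℕ => (n : ℝ) * g n / kk β n) Filter.atTop (nhds 0))
    (T : ℝ) (x : ℕ → ℝ) (X : ℕ → ℝ → ℝ) (hsol : IsDyadicSolution β φ g x X)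
    (σ : ℝ) (hσ : β < σ)
    (hP : ∀ ε : ℝ, 0 < ε → ∃ C : ℝ, 0 ≤ C ∧ ∀ t ∈ Icc ε T, ∀ n : ℕ,
      X n t ^ 2 ≤ C * (2 : ℝ) ^ (-(2 * σ * n))) :
    ∀ ε : ℝ, 0 < ε → ∃ C : ℝ, 0 ≤ C ∧ ∀ t ∈ Icc ε T, ∀ n : ℕ,
      X n t ^ 2 ≤ C * (2 : ℝ) ^ (-(2 * (2 * σ - β) * n)) := by
  intro ε hε
  obtain ⟨C, hC, hb⟩ := hP (ε / 2) (by linarith)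
  have hΦ : 0 ≤ Φ := (abs_nonneg _).trans (hφ 0)
  set D := √C with hD
  have hD0 : 0 ≤ D := Real.sqrt_nonneg _
  set κ := 2 * (σ - β) * Real.log 2 / (ε / 2) with hκd
  have hlog := Real.log_pos (show (1 : ℝ) < 2 by norm_num)
  have hκ : 0 < κ := by
    have : 0 < σ - β := by linarith
    positivity
  set B := κ + Φ * D + 1 with hBd
  have hB : 0 < B := by positivity
  obtain ⟨N, hN⟩ := eventually_atTop.1 (hng.eventually (gt_mem_nhds (inv_pos.2 hB)))
  have hkpos : ∀ n, 0 < kk β n := fun n => Real.rpow_pos_of_pos (by norm_num) _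
  have hlam : ∀ n, N ≤ n → 1 ≤ n → B * n ≤ kk β n / g n := by
    intro n hn h1
    have h2 := hN n hn
    have h3 := hgpos n h1
    have h4 := hkpos n
    rw [le_div_iff₀ h3]
    rw [div_lt_iff₀ h4] at h2
    have := mul_le_mul_of_nonneg_left h2.le hB.le
    rw [← mul_assoc B B⁻¹, mul_inv_cancel₀ hB.ne', one_mul] at this
    linarith
  have hkX : ∀ t ∈ Icc (ε / 2) T, ∀ n, |kk β n * X (n + 1) t| ≤ D := by
    intro t ht n
    apply Real.abs_le_sqrt
    have h1 := hb t ht (n + 1)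
    have h2 : kk β n ^ 2 * (2 : ℝ) ^ (-(2 * σ * ((n + 1 : ℕ) : ℝ))) ≤ 1 := by
      unfold kk
      rw [← Real.rpow_natCast, ← Real.rpow_mul (by norm_num), ← Real.rpow_add (by norm_num)]
      apply Real.rpow_le_one_of_one_le_of_nonpos (by norm_num)
      push_cast
      have : (0 : ℝ) ≤ n := Nat.cast_nonneg n
      nlinarith
    calc (kk β n * X (n + 1) t) ^ 2 = kk β n ^ 2 * X (n + 1) t ^ 2 := by ring
      _ ≤ kk β n ^ 2 * (C * (2 : ℝ) ^ (-(2 * σ * ((n + 1 : ℕ) : ℝ)))) := by gcongr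
      _ = C * (kk β n ^ 2 * (2 : ℝ) ^ (-(2 * σ * ((n + 1 : ℕ) : ℝ)))) := by ring
      _ ≤ C * 1 := by gcongr
      _ = C := mul_one C
  set E := (Φ * C) ^ 2 / κ ^ 2 * (2 : ℝ) ^ (2 * (2 * σ - β)) with hE
  have hE0 : 0 ≤ E := by positivity
  refine ⟨C * (2 : ℝ) ^ (2 * (σ - β) * (N + 1 : ℝ)) + (C + E), by positivity, ?_⟩
  intro t ht n
  have ht' : t ∈ Icc (ε / 2) T := ⟨by linarith [ht.1], ht.2⟩
  by_cases hn : n < N + 1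
  · have h1 : (2 : ℝ) ^ (-(2 * σ * (n : ℝ))) ≤
        (2 : ℝ) ^ (2 * (σ - β) * (N + 1 : ℝ)) * (2 : ℝ) ^ (-(2 * (2 * σ - β) * n)) := by
      rw [← Real.rpow_add (by norm_num)]
      apply Real.rpow_le_rpow_of_exponent_le (by norm_num)
      have : (n : ℝ) ≤ N + 1 := by exact_mod_cast hn.le
      nlinarith
    calc X n t ^ 2 ≤ C * (2 : ℝ) ^ (-(2 * σ * n)) := hb t ht' n
      _ ≤ C * ((2 : ℝ) ^ (2 * (σ - β) * (N + 1 : ℝ)) * (2 : ℝ) ^ (-(2 * (2 * σ - β) * n))) := by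
        gcongr
      _ ≤ _ := by
        rw [← mul_assoc]
        gcongr
        linarith
  · obtain ⟨m, rfl⟩ : ∃ m, n = m + 1 := ⟨n - 1, by omega⟩
    have hmN : N ≤ m + 1 := by omega
    have hm1 : (1 : ℝ) ≤ ((m + 1 : ℕ) : ℝ) := by
      push_cast; linarith [(Nat.cast_nonneg m : (0 : ℝ) ≤ m)]
    set w := (2 : ℝ) ^ ((β - 2 * σ) * m) with hw
    have hw0 : 0 < w := Real.rpow_pos_of_pos (by norm_num) _
    have hμ : 0 < κ * ((m + 1 : ℕ) : ℝ) := by positivity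
    have hode := aux_ode (X (m + 1)) (fun t => φ m * kk β m * X m t ^ 2)
      (fun t => kk β (m + 1) / g (m + 1) + φ (m + 1) * (kk β (m + 1) * X (m + 1 + 1) t))
      (ε / 2) T (κ * ((m + 1 : ℕ) : ℝ)) (Φ * C * w) hμ ?_ ?_ ?_ t ht'
    · have hexp : Real.exp (-(κ * ((m + 1 : ℕ) : ℝ) * (t - ε / 2))) ≤
          (2 : ℝ) ^ (-(2 * (σ - β) * ((m + 1 : ℕ) : ℝ))) := by
        rw [Real.rpow_def_of_pos (by norm_num)]
        apply Real.exp_le_exp.2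
        have h1 : κ * (ε / 2) = 2 * (σ - β) * Real.log 2 := by
          rw [hκd]; field_simp
        have h2 : κ * ((m + 1 : ℕ) : ℝ) * (ε / 2) ≤ κ * ((m + 1 : ℕ) : ℝ) * (t - ε / 2) := by
          apply mul_le_mul_of_nonneg_left _ hμ.le
          linarith [ht.1]
        have h3 : κ * ((m + 1 : ℕ) : ℝ) * (ε / 2)
          = 2 * (σ - β) * Real.log 2 * ((m + 1 : ℕ) : ℝ) := by rw [← h1]; ring
        linarith
      have haT : ε / 2 ∈ Icc (ε / 2) T := ⟨le_refl _, ht'.1.trans ht'.2⟩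
      have hA : X (m + 1) (ε / 2) ^ 2 * Real.exp (-(κ * ((m + 1 : ℕ) : ℝ) * (t - ε / 2))) ≤
          C * (2 : ℝ) ^ (-(2 * (2 * σ - β) * ((m + 1 : ℕ) : ℝ))) := by
        calc _ ≤ (C * (2 : ℝ) ^ (-(2 * σ * ((m + 1 : ℕ) : ℝ)))) *
              (2 : ℝ) ^ (-(2 * (σ - β) * ((m + 1 : ℕ) : ℝ))) := by
              gcongr
              exact hb _ haT _
          _ = _ := by
            rw [mul_assoc, ← Real.rpow_add (by norm_num)]
            congr 2; ring
      have hBB : (Φ * C * w) ^ 2 / (κ * ((m + 1 : ℕ) : ℝ)) ^ 2 ≤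
          E * (2 : ℝ) ^ (-(2 * (2 * σ - β) * ((m + 1 : ℕ) : ℝ))) := by
        have hw2 : w ^ 2 = (2 : ℝ) ^ (2 * (2 * σ - β)) *
            (2 : ℝ) ^ (-(2 * (2 * σ - β) * ((m + 1 : ℕ) : ℝ))) := by
          rw [hw, ← Real.rpow_natCast, ← Real.rpow_mul (by norm_num),
            ← Real.rpow_add (by norm_num)]
          congr 1; push_cast; ring
        calc _ ≤ (Φ * C * w) ^ 2 / κ ^ 2 := by
              gcongr
              exact le_mul_of_one_le_right hκ.le hm1
          _ = (Φ * C) ^ 2 / κ ^ 2 * w ^ 2 := by ring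
          _ = _ := by rw [hw2, hE]; ring
      have hpos : 0 ≤ C * (2 : ℝ) ^ (2 * (σ - β) * (N + 1 : ℝ)) *
        (2 : ℝ) ^ (-(2 * (2 * σ - β) * ((m + 1 : ℕ) : ℝ))) := by positivity
      rw [add_mul, add_mul]
      linarith
    · intro r hr
      have hr0 : 0 < r := by linarith [hr.1]
      have h1 := (hsol.2.2 (m + 1) (by omega) r hr0.le).hasDerivAt (Ici_mem_nhds hr0)
      simp only [Nat.add_sub_cancel] at h1
      refine h1.congr_deriv ?_
      beta_reduce
      ring
    · intro r hr
      have h1 := hb r hr m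
      have h2 : kk β m * (2 : ℝ) ^ (-(2 * σ * (m : ℝ))) = w := by
        rw [hw, kk, ← Real.rpow_add (by norm_num)]; congr 1; ring
      have h3 := hkpos m
      simp only [abs_mul, abs_of_pos h3, abs_of_nonneg (sq_nonneg (X m r))]
      calc |φ m| * kk β m * X m r ^ 2
          ≤ Φ * kk β m * (C * (2 : ℝ) ^ (-(2 * σ * (m : ℝ)))) := by
            gcongr
            exact hφ m
        _ = _ := by rw [← h2]; ring
    · intro r hr
      have h1 := hlam (m + 1) hmN (by omega)
      have h2 := hkX r hr (m + 1)
      have h3 : |φ (m + 1) * (kk β (m + 1) * X (m + 1 + 1) r)| ≤ Φ * D := by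
        rw [abs_mul]
        exact mul_le_mul (hφ _) h2 (abs_nonneg _) hΦ
      have h4 := (abs_le.1 h3).1
      have h5 : 0 ≤ Φ * D := by positivity
      have h6 : κ * ((m + 1 : ℕ) : ℝ) + Φ * D ≤ B * ((m + 1 : ℕ) : ℝ) := by
        rw [hBd]; nlinarith
      show _ ≤ kk β (m + 1) / g (m + 1) + φ (m + 1) * (kk β (m + 1) * X (m + 1 + 1) r)
      linarith

/-- Smoothing by dissipation: if `n·gₙ/kₙ → 0`, `s > β`, and `X` is a solution bounded
in `Hˢ` on `[0,T]`, then `X ∈ L^∞_loc((0,T]; H^{s'})` for every `s' > 0`. -/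
theorem dyadic_smoothing
    (β : ℝ) (hβ : 0 < β) (φ g : ℕ → ℝ)
    (hφ : ∃ Φ : ℝ, ∀ n : ℕ, |φ n| ≤ Φ)
    (hgpos : ∀ n : ℕ, 1 ≤ n → 0 < g n)
    (hgmono : ∀ n m : ℕ, 1 ≤ n → n ≤ m → g n ≤ g m)
    (hkg : ∃ N : ℕ, ∀ n m : ℕ, N ≤ n → n ≤ m → kk β n / g n ≤ kk β m / g m)
    (hgdiv : ¬ Summable fun n : ℕ => (g (n + 1))⁻¹)
    (hng : Filter.Tendsto (fun n : ℕ => (n : ℝ) * g n / kk β n) Filter.atTop (nhds 0))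
    (T : ℝ) (hT : 0 < T) (s : ℝ) (hs : β < s)
    (x : ℕ → ℝ) (X : ℕ → ℝ → ℝ) (hsol : IsDyadicSolution β φ g x X)
    (hx : MemHs s x) (hX : MemLinftyHs s X (Set.Icc 0 T)) :
    ∀ ε : ℝ, 0 < ε → ε < T → ∀ s' : ℝ, 0 < s' →
      MemLinftyHs s' X (Set.Icc ε T) := by
  obtain ⟨Φ, hΦ⟩ := hφ
  have hP : ∀ j : ℕ, ∀ ε : ℝ, 0 < ε → ∃ C : ℝ, 0 ≤ C ∧ ∀ t ∈ Icc ε T, ∀ n : ℕ,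
      X n t ^ 2 ≤ C * (2 : ℝ) ^ (-(2 * (β + 2 ^ j * (s - β)) * n)) := by
    intro j
    induction j with
    | zero =>
      intro ε hε
      obtain ⟨M, hM⟩ := hX
      refine ⟨max M 0, le_max_right _ _, ?_⟩
      intro t ht n
      have ht' : t ∈ Icc 0 T := ⟨hε.le.trans ht.1, ht.2⟩
      rcases n with _ | n
      · rw [hsol.1 t]
        have h0 : 0 ≤ max M 0 := le_max_right _ _
        rw [zero_pow two_ne_zero]
        positivity
      · obtain ⟨h1, h2⟩ := hM t ht'
        have h3 := (h1.le_tsum n (fun i _ => by positivity)).trans (h2.trans (le_max_left M 0))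
        rw [Real.rpow_neg (by norm_num), ← div_eq_mul_inv, le_div_iff₀ (by positivity)]
        convert h3 using 1
        rw [mul_comm]
        congr 2
        push_cast; ring
    | succ j ih =>
      have hpos : 0 < (2 : ℝ) ^ j * (s - β) := by
        have : 0 < s - β := by linarith
        positivity
      have := aux_step β hβ φ g Φ hΦ hgpos hng T x X hsol (β + 2 ^ j * (s - β))
        (by linarith) ih
      have e : 2 * (β + 2 ^ j * (s - β)) - β = β + 2 ^ (j + 1) * (s - β) := by ring
      rwa [e] at this
  intro ε hε _ s' hs'
  have hsb : 0 < s - β := by linarith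
  obtain ⟨j, hj⟩ := pow_unbounded_of_one_lt ((s' + 1) / (s - β)) (show (1 : ℝ) < 2 by norm_num)
  rw [div_lt_iff₀ hsb] at hj
  obtain ⟨C, hC, hb⟩ := hP j ε hε
  have hsum : Summable (fun n : ℕ => C * (1 / 2 : ℝ) ^ n) :=
    (summable_geometric_of_lt_one (by norm_num) (by norm_num)).mul_left C
  have hle : ∀ t ∈ Icc ε T, ∀ n : ℕ,
      (2 : ℝ) ^ (2 * s' * ((n : ℝ) + 1)) * (X (n + 1) t) ^ 2 ≤ C * (1 / 2 : ℝ) ^ n := by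
    intro t ht n
    have h1 := hb t ht (n + 1)
    have h2 : (2 : ℝ) ^ (2 * s' * ((n : ℝ) + 1)) *
        (2 : ℝ) ^ (-(2 * (β + 2 ^ j * (s - β)) * ((n + 1 : ℕ) : ℝ))) ≤ (1 / 2 : ℝ) ^ n := by
      have h3 : (1 / 2 : ℝ) ^ n = (2 : ℝ) ^ (-(n : ℝ)) := by
        rw [Real.rpow_neg (by norm_num), Real.rpow_natCast]; simp
      rw [h3, ← Real.rpow_add (by norm_num)]
      apply Real.rpow_le_rpow_of_exponent_le (by norm_num)
      push_cast
      have : (0 : ℝ) ≤ n := Nat.cast_nonneg n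
      nlinarith
    calc _ ≤ (2 : ℝ) ^ (2 * s' * ((n : ℝ) + 1)) *
        (C * (2 : ℝ) ^ (-(2 * (β + 2 ^ j * (s - β)) * ((n + 1 : ℕ) : ℝ)))) := by gcongr
      _ = C * ((2 : ℝ) ^ (2 * s' * ((n : ℝ) + 1)) *
        (2 : ℝ) ^ (-(2 * (β + 2 ^ j * (s - β)) * ((n + 1 : ℕ) : ℝ)))) := by ring
      _ ≤ _ := by gcongr
  refine ⟨∑' n : ℕ, C * (1 / 2 : ℝ) ^ n, fun t ht => ?_⟩
  have hs1 := Summable.of_nonneg_of_le (fun n => by positivity) (hle t ht) hsum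
  exact ⟨hs1, hs1.tsum_le_tsum (hle t ht) hsum⟩
end

section
/- Suppose that g_n is non-decreasing, k_n/g_n is eventually non-decreasing, ∑_{n≥1} g_n^{-1} = ∞, and n·g_n/k_n → 0 as n → ∞. Let s₁ > β and s₂ ∈ (s₁, 2s₁−β). If X is a weak solution of the dyadic model with X(0) ∈ H^{s₁} and X ∈ L^∞([0,T]; H^{s₁}), then X ∈ L^∞_loc((0,T]; H^{s₂}), and there exists a non-decreasing upper semi-continuous function φ̃ : (0,∞) → ℝ, positive on (0,∞), which extended by φ̃(0)=0 is continuous at 0, such that sup_{t∈(0,T]} ( φ̃(t) · ‖X(t)‖_{H^{s₂}} ) < ∞. -/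
open scoped BigOperators ENNReal
open MeasureTheory Filter Set Topology

lemma aux_ode_s15 (lam A B T : ℝ) (hlam : 0 ≤ lam) (hA : 0 ≤ A) (hB : 0 ≤ B)
    (u a b : ℝ → ℝ)
    (hu : ∀ t, 0 ≤ t → HasDerivWithinAt u (a t - b t * u t - lam * u t) (Set.Ici 0) t)
    (ha : ∀ t ∈ Set.Icc 0 T, |a t| ≤ A) (hb : ∀ t ∈ Set.Icc 0 T, |b t| ≤ B)
    (t : ℝ) (ht : t ∈ Set.Icc 0 T) :
    u t ^ 2 ≤ Real.exp ((2 * B + 1) * T) * (u 0 ^ 2 * Real.exp (-(2 * lam * t)) + A ^ 2 * T) := by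
  obtain ⟨ht0, htT⟩ := ht
  have key : AntitoneOn (fun r => Real.exp ((2 * lam - (2 * B + 1)) * r) * u r ^ 2
      - A ^ 2 * (r * Real.exp (2 * lam * r))) (Set.Icc 0 T) := by
    refine antitoneOn_of_hasDerivWithinAt_nonpos (convex_Icc 0 T)
      (f' := fun r => (Real.exp ((2 * lam - (2 * B + 1)) * r) * ((2 * lam - (2 * B + 1)))) * u r ^ 2
        + Real.exp ((2 * lam - (2 * B + 1)) * r) * (2 * u r * (a r - b r * u r - lam * u r))
        - A ^ 2 * (1 * Real.exp (2 * lam * r) + r * (Real.exp (2 * lam * r) * (2 * lam)))) ?_ ?_ ?_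
    · intro r hr
      have h1 : ContinuousWithinAt u (Set.Icc 0 T) r :=
        ((hu r hr.1).continuousWithinAt).mono Set.Icc_subset_Ici_self
      have h2 : ContinuousWithinAt (fun r => Real.exp ((2 * lam - (2 * B + 1)) * r)) (Set.Icc 0 T) r :=
        (by fun_prop : Continuous fun r => Real.exp ((2 * lam - (2 * B + 1)) * r)).continuousWithinAt
      have h3 : ContinuousWithinAt (fun r => A ^ 2 * (r * Real.exp (2 * lam * r))) (Set.Icc 0 T) r :=
        (by fun_prop : Continuous fun r => A ^ 2 * (r * Real.exp (2 * lam * r))).continuousWithinAt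
      exact (h2.mul (h1.pow 2)).sub h3
    · intro r hr
      rw [interior_Icc] at hr
      have h1 : HasDerivAt u (a r - b r * u r - lam * u r) r :=
        (hu r hr.1.le).hasDerivAt (Ici_mem_nhds hr.1)
      have h2 : ∀ c : ℝ, HasDerivAt (fun r => Real.exp (c * r)) (Real.exp (c * r) * c) r := by
        intro c
        have := ((hasDerivAt_id r).const_mul c).exp
        simpa using this
      have h3 : HasDerivAt (fun r => u r ^ 2) (2 * u r * (a r - b r * u r - lam * u r)) r := by
        have := h1.fun_pow 2
        simpa using this
      exact (((h2 _).mul h3).sub (((hasDerivAt_id r).mul (h2 (2 * lam))).const_mul (A ^ 2))).hasDerivWithinAt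
    · intro r hr
      rw [interior_Icc] at hr
      have hr' : r ∈ Set.Icc 0 T := ⟨hr.1.le, hr.2.le⟩
      have e1 := Real.exp_pos ((2 * lam - (2 * B + 1)) * r)
      have e2 : Real.exp ((2 * lam - (2 * B + 1)) * r) ≤ Real.exp (2 * lam * r) := by
        apply Real.exp_le_exp.2
        nlinarith [hr.1, mul_nonneg hB hr.1.le]
      have e3 := Real.exp_pos (2 * lam * r)
      have ha' : a r ^ 2 ≤ A ^ 2 := sq_le_sq' (by linarith [(abs_le.1 (ha r hr')).1]) (abs_le.1 (ha r hr')).2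
      have hb' : 0 ≤ (B + b r) * u r ^ 2 :=
        mul_nonneg (by linarith [(abs_le.1 (hb r hr')).1]) (sq_nonneg _)
      have h4 : 2 * u r * a r - 2 * b r * u r ^ 2 - (2 * B + 1) * u r ^ 2 ≤ A ^ 2 := by
        nlinarith [sq_nonneg (u r - a r)]
      have h5 := mul_le_mul_of_nonneg_left h4 e1.le
      have h6 := mul_le_mul_of_nonneg_right e2 (sq_nonneg A)
      have h7 : 0 ≤ A ^ 2 * (r * (Real.exp (2 * lam * r) * (2 * lam))) := by
        have := hr.1
        positivity
      show _ ≤ (0 : ℝ)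
      nlinarith
  have h := key (⟨le_refl 0, ht0.trans htT⟩ : (0 : ℝ) ∈ Set.Icc 0 T) ⟨ht0, htT⟩ ht0
  simp only [mul_zero, Real.exp_zero, one_mul, zero_mul, sub_zero] at h
  have p1 : u t ^ 2 = Real.exp ((2 * B + 1) * t - 2 * lam * t) *
      (Real.exp ((2 * lam - (2 * B + 1)) * t) * u t ^ 2) := by
    rw [← mul_assoc, ← Real.exp_add]
    ring_nf
    simp
  have p2 : Real.exp ((2 * B + 1) * t - 2 * lam * t) *
      (u 0 ^ 2 + A ^ 2 * (t * Real.exp (2 * lam * t)))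
      = Real.exp ((2 * B + 1) * t) * (u 0 ^ 2 * Real.exp (-(2 * lam * t)) + A ^ 2 * t) := by
    rw [sub_eq_add_neg, Real.exp_add]
    have : Real.exp (-(2 * lam * t)) * Real.exp (2 * lam * t) = 1 := by
      rw [← Real.exp_add]; simp
    linear_combination Real.exp ((2 * B + 1) * t) * A ^ 2 * t * this
  rw [p1]
  calc _ ≤ Real.exp ((2 * B + 1) * t - 2 * lam * t) *
      (u 0 ^ 2 + A ^ 2 * (t * Real.exp (2 * lam * t))) := by
        apply mul_le_mul_of_nonneg_left _ (Real.exp_pos _).le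
        linarith
    _ = _ := p2
    _ ≤ _ := by
        gcongr

lemma aux_geom (d : ℝ) (hd : d < 0) :
    Summable fun n : ℕ => (2 : ℝ) ^ (d * ((n : ℝ) + 1)) := by
  have h : Summable fun n : ℕ => ((2 : ℝ) ^ d) ^ (n + 1) :=
    (summable_nat_add_iff 1).2 (summable_geometric_of_lt_one (by positivity)
      (Real.rpow_lt_one_of_one_lt_of_neg (by norm_num) hd))
  refine h.congr fun n => ?_
  rw [← Real.rpow_natCast, ← Real.rpow_mul (by norm_num)]
  push_cast
  rfl

lemma aux_summ_s15 (d : ℝ) (hd : 0 < d) (l : ℕ → ℝ)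
    (hl : ∀ c : ℝ, ∀ᶠ n : ℕ in atTop, c * n ≤ l n) (t : ℝ) (ht : 0 < t) :
    Summable fun n : ℕ => (2 : ℝ) ^ (2 * d * ((n : ℝ) + 1)) * Real.exp (-(2 * l (n + 1) * t)) := by
  have h0 : Summable fun n : ℕ => Real.exp (-2 * ((n + 1 : ℕ) : ℝ)) := by
    have h : Summable fun n : ℕ => Real.exp (-2) ^ (n + 1) :=
      (summable_nat_add_iff 1).2 (summable_geometric_of_lt_one (by positivity)
        (by rw [Real.exp_lt_one_iff]; norm_num))
    refine h.congr fun n => ?_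
    rw [← Real.exp_nat_mul]
    ring_nf
  refine Summable.of_norm_bounded_eventually_nat h0 ?_
  filter_upwards [(tendsto_add_atTop_nat 1).eventually (hl ((d + 1) / t))] with n hn
  rw [Real.norm_of_nonneg (by positivity), Real.rpow_def_of_pos (by norm_num), ← Real.exp_add]
  apply Real.exp_le_exp.2
  have hn' : (d + 1) * ((n + 1 : ℕ) : ℝ) ≤ l (n + 1) * t := by
    have := mul_le_mul_of_nonneg_right hn ht.le
    calc _ = (d + 1) / t * ((n + 1 : ℕ) : ℝ) * t := by field_simp
      _ ≤ _ := this
  push_cast at hn' ⊢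
  have hlog : Real.log 2 ≤ 1 := by linarith [Real.log_two_lt_d9]
  have : Real.log 2 * (2 * d * ((n : ℝ) + 1)) ≤ 1 * (2 * d * ((n : ℝ) + 1)) := by
    apply mul_le_mul_of_nonneg_right hlog; positivity
  nlinarith

lemma aux_lam (β : ℝ) (g : ℕ → ℝ) (hgpos : ∀ n : ℕ, 1 ≤ n → 0 < g n)
    (hng : Filter.Tendsto (fun n : ℕ => (n : ℝ) * g n / kk β n) Filter.atTop (nhds 0)) (c : ℝ) :
    ∀ᶠ n : ℕ in atTop, c * n ≤ kk β n / g n := by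
  have hc : 0 < |c| + 1 := by positivity
  filter_upwards [hng.eventually_lt_const (inv_pos.2 hc), eventually_ge_atTop 1] with n hn h1
  have hg := hgpos n h1
  have hk : 0 < kk β n := by unfold kk; positivity
  rw [div_lt_iff₀ hk] at hn
  rw [le_div_iff₀ hg]
  have h2 : (|c| + 1) * (n * g n) ≤ kk β n := by
    have := mul_le_mul_of_nonneg_left hn.le hc.le
    rwa [mul_inv_cancel_left₀ hc.ne'] at this
  have h3 : 0 ≤ n * g n := by positivity
  nlinarith [le_abs_self c]

lemma aux_F (d : ℝ) (hd : 0 < d) (l : ℕ → ℝ) (hl0 : ∀ n, 0 ≤ l (n + 1))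
    (hs : ∀ t : ℝ, 0 < t → Summable fun n : ℕ =>
      (2 : ℝ) ^ (2 * d * ((n : ℝ) + 1)) * Real.exp (-(2 * l (n + 1) * t))) :
    ∃ F : ℝ → ℝ, F 0 = 0 ∧
      MonotoneOn F (Set.Ioi 0) ∧
      UpperSemicontinuousOn F (Set.Ioi 0) ∧
      ContinuousWithinAt F (Set.Ici 0) 0 ∧
      (∀ t : ℝ, 0 < t → 0 < F t) ∧
      (∀ t : ℝ, 0 < t → F t * (1 + ∑' n : ℕ,
        (2 : ℝ) ^ (2 * d * ((n : ℝ) + 1)) * Real.exp (-(2 * l (n + 1) * t))) ≤ 1) := by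
  set G : ℝ → ℝ := fun t => ∑' n : ℕ,
        (2 : ℝ) ^ (2 * d * ((n : ℝ) + 1)) * Real.exp (-(2 * l (n + 1) * t)) with hG
  have hG0 : ∀ t, 0 ≤ G t := fun t => tsum_nonneg fun n => by positivity
  have hle : ∀ s t : ℝ, s ≤ t → ∀ n : ℕ,
      (2 : ℝ) ^ (2 * d * ((n : ℝ) + 1)) * Real.exp (-(2 * l (n + 1) * t)) ≤
      (2 : ℝ) ^ (2 * d * ((n : ℝ) + 1)) * Real.exp (-(2 * l (n + 1) * s)) := by
    intro s t hst n
    have := hl0 n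
    gcongr
  have hanti : ∀ s t : ℝ, 0 < s → s ≤ t → G t ≤ G s := fun s t h0 hst =>
    (hs t (h0.trans_le hst)).tsum_le_tsum (hle s t hst) (hs s h0)
  have hcont : ∀ t : ℝ, 0 < t → ContinuousAt G t := by
    intro t ht
    have : ContinuousOn G (Set.Ici (t / 2)) := by
      refine continuousOn_tsum (fun n => ?_) (hs (t / 2) (by linarith)) ?_
      · exact (by fun_prop : Continuous fun r : ℝ =>
          (2 : ℝ) ^ (2 * d * ((n : ℝ) + 1)) * Real.exp (-(2 * l (n + 1) * r))).continuousOn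
      · intro n r hr
        rw [Real.norm_of_nonneg (by positivity)]
        exact hle _ _ hr n
    exact this.continuousAt (Ici_mem_nhds (by linarith))
  refine ⟨fun t => min t 1 / (1 + G t), by simp, ?_, ?_, ?_, ?_, ?_⟩
  · intro s h0 t h1 hst
    simp only [Set.mem_Ioi] at h0 h1
    have := hanti s t h0 hst
    have := hG0 t
    have : 0 ≤ min t 1 := by positivity
    show min s 1 / (1 + G s) ≤ min t 1 / (1 + G t)
    gcongr
  · have : ContinuousOn (fun t => min t 1 / (1 + G t)) (Set.Ioi 0) := by
      intro t ht
      refine ContinuousAt.continuousWithinAt ?_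
      refine ContinuousAt.div (by fun_prop) (continuousAt_const.add (hcont t ht)) ?_
      have := hG0 t
      positivity
    exact this.upperSemicontinuousOn
  · unfold ContinuousWithinAt
    simp only [zero_le_one, min_eq_left, zero_div]
    refine squeeze_zero' (g := fun t => t) ?_ ?_ ?_
    · filter_upwards [self_mem_nhdsWithin] with t ht
      have h1 := hG0 t
      have : (0 : ℝ) ≤ t := ht
      positivity
    · filter_upwards [self_mem_nhdsWithin] with t ht
      have h1 := hG0 t
      have h2 : (0 : ℝ) ≤ t := ht
      rw [div_le_iff₀ (by positivity)]
      nlinarith [min_le_left t 1]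
    · exact tendsto_nhdsWithin_of_tendsto_nhds tendsto_id
  · intro t ht
    have h1 := hG0 t
    positivity
  · intro t ht
    have h1 := hG0 t
    show min t 1 / (1 + G t) * (1 + G t) ≤ 1
    rw [div_mul_cancel₀ _ (by positivity)]
    exact min_le_right _ _

/-- The smoothing lemma: for `s₁ > β` and `s₂ ∈ (s₁, 2s₁ − β)`, a solution bounded in
`H^{s₁}` on `[0,T]` lies in `L^∞_loc((0,T]; H^{s₂})`; more precisely there is a
non-decreasing upper semi-continuous weight `F`, vanishing continuously at `0` and
positive on `(0,∞)`, with `sup_{t∈(0,T]} F(t)·‖X(t)‖_{H^{s₂}} < ∞`. -/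
theorem dyadic_smoothing_quantitative
    (β : ℝ) (hβ : 0 < β) (φ g : ℕ → ℝ)
    (hφ : ∃ Φ : ℝ, ∀ n : ℕ, |φ n| ≤ Φ)
    (hgpos : ∀ n : ℕ, 1 ≤ n → 0 < g n)
    (hgmono : ∀ n m : ℕ, 1 ≤ n → n ≤ m → g n ≤ g m)
    (hkg : ∃ N : ℕ, ∀ n m : ℕ, N ≤ n → n ≤ m → kk β n / g n ≤ kk β m / g m)
    (hgdiv : ¬ Summable fun n : ℕ => (g (n + 1))⁻¹)
    (hng : Filter.Tendsto (fun n : ℕ => (n : ℝ) * g n / kk β n) Filter.atTop (nhds 0))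
    (T : ℝ) (hT : 0 < T) (s₁ s₂ : ℝ) (hs₁ : β < s₁) (hs₂ : s₁ < s₂)
    (hs₂' : s₂ < 2 * s₁ - β)
    (x : ℕ → ℝ) (X : ℕ → ℝ → ℝ) (hsol : IsDyadicSolution β φ g x X)
    (hx : MemHs s₁ x) (hX : MemLinftyHs s₁ X (Set.Icc 0 T)) :
    ∃ F : ℝ → ℝ, F 0 = 0 ∧
      MonotoneOn F (Set.Ioi 0) ∧
      UpperSemicontinuousOn F (Set.Ioi 0) ∧
      ContinuousWithinAt F (Set.Ici 0) 0 ∧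
      (∀ t : ℝ, 0 < t → 0 < F t) ∧
      ∃ M : ℝ, ∀ t ∈ Set.Ioc (0 : ℝ) T,
        Summable (fun n : ℕ => (2 : ℝ) ^ (2 * s₂ * ((n : ℝ) + 1)) * (X (n + 1) t) ^ 2) ∧
        F t * Real.sqrt (∑' n : ℕ,
            (2 : ℝ) ^ (2 * s₂ * ((n : ℝ) + 1)) * (X (n + 1) t) ^ 2) ≤ M := by
  obtain ⟨Φ, hΦ⟩ := hφ
  obtain ⟨M, hM⟩ := hX
  obtain ⟨hX0, -, hode⟩ := hsol
  have hΦ0 : 0 ≤ Φ := (abs_nonneg _).trans (hΦ 0)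
  have hM0 : 0 ≤ M := (tsum_nonneg fun n => by positivity).trans (hM 0 ⟨le_refl 0, hT.le⟩).2
  set K := M + 1 with hK
  have hK0 : 0 < K := by positivity
  have two0 : (0 : ℝ) < 2 := by norm_num
  have hXb : ∀ m : ℕ, ∀ t ∈ Set.Icc 0 T, |X m t| ≤ K * (2 : ℝ) ^ (-s₁ * m) := by
    intro m t ht
    rcases m with _ | m
    · rw [hX0 t]; simp; positivity
    · obtain ⟨h1, h2⟩ := hM t ht
      have h3 := (h1.le_tsum m (fun j _ => by positivity)).trans h2
      apply abs_le_of_sq_le_sq _ (by positivity)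
      have h4 : ((2 : ℝ) ^ (-s₁ * ((m + 1 : ℕ) : ℝ))) ^ 2 * (2 : ℝ) ^ (2 * s₁ * ((m : ℝ) + 1)) = 1 := by
        rw [← Real.rpow_natCast, ← Real.rpow_mul two0.le, ← Real.rpow_add two0]
        push_cast
        ring_nf
        simp
      have h5 : M ≤ K ^ 2 := by nlinarith
      have h6 := mul_le_mul_of_nonneg_left (h3.trans h5) (sq_nonneg ((2 : ℝ) ^ (-s₁ * ((m + 1 : ℕ) : ℝ))))
      rw [← mul_assoc, h4, one_mul] at h6
      rw [mul_pow]
      linarith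
  have hlam := aux_lam β g hgpos hng
  have hl0 : ∀ n : ℕ, 0 ≤ kk β (n + 1) / g (n + 1) := fun n =>
    div_nonneg (by unfold kk; positivity) (hgpos _ (by omega)).le
  have hd : 0 < s₂ - s₁ := by linarith
  have hsum := aux_summ_s15 (s₂ - s₁) hd (fun n => kk β n / g n) hlam
  obtain ⟨F, hF0, hF1, hF2, hF3, hF4, hF5⟩ := aux_F (s₂ - s₁) hd (fun n => kk β n / g n) hl0 hsum
  refine ⟨F, hF0, hF1, hF2, hF3, hF4, ?_⟩
  set E := Real.exp ((2 * (Φ * K) + 1) * T) with hE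
  have hgeo := aux_geom (2 * s₂ + 2 * β - 4 * s₁) (by linarith)
  set C := Φ * K ^ 2 * (2 : ℝ) ^ (2 * s₁) with hC
  have hC0 : 0 ≤ C := by positivity
  have hpt : ∀ t ∈ Set.Icc 0 T, ∀ n : ℕ,
      (2 : ℝ) ^ (2 * s₂ * ((n : ℝ) + 1)) * (X (n + 1) t) ^ 2 ≤
      E * K ^ 2 * ((2 : ℝ) ^ (2 * (s₂ - s₁) * ((n : ℝ) + 1)) *
          Real.exp (-(2 * (kk β (n + 1) / g (n + 1)) * t)))
        + E * C ^ 2 * T * (2 : ℝ) ^ ((2 * s₂ + 2 * β - 4 * s₁) * ((n : ℝ) + 1)) := by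
    intro t ht n
    have h := aux_ode_s15 (kk β (n + 1) / g (n + 1)) (C * (2 : ℝ) ^ ((β - 2 * s₁) * ((n : ℝ) + 1)))
      (Φ * K) T (hl0 n) (by positivity) (by positivity) (X (n + 1))
      (fun t => φ n * kk β n * X n t ^ 2) (fun t => φ (n + 1) * kk β (n + 1) * X (n + 2) t)
      (by
        intro r hr
        have := hode (n + 1) (by omega) r hr
        simp only [Nat.add_sub_cancel] at this
        convert this using 1
        ring)
      (by
        intro r hr
        have hx := hXb n r hr
        have hx2 : X n r ^ 2 ≤ (K * (2 : ℝ) ^ (-s₁ * n)) ^ 2 := by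
          rw [← sq_abs]; gcongr
        rw [abs_mul, abs_mul, abs_of_nonneg (sq_nonneg (X n r)),
          abs_of_nonneg (by unfold kk; positivity : 0 ≤ kk β n)]
        calc |φ n| * kk β n * X n r ^ 2 ≤ Φ * kk β n * (K * (2 : ℝ) ^ (-s₁ * n)) ^ 2 := by
              have : 0 ≤ kk β n := by unfold kk; positivity
              have := hΦ n
              gcongr
          _ = Φ * K ^ 2 * ((2 : ℝ) ^ (β * n) * ((2 : ℝ) ^ (-s₁ * n)) ^ 2) := by unfold kk; ring
          _ = Φ * K ^ 2 * (2 : ℝ) ^ (β * n - 2 * s₁ * n) := by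
              congr 1
              rw [← Real.rpow_natCast, ← Real.rpow_mul two0.le, ← Real.rpow_add two0]
              push_cast
              ring_nf
          _ ≤ Φ * K ^ 2 * (2 : ℝ) ^ (2 * s₁ + (β - 2 * s₁) * ((n : ℝ) + 1)) := by
              gcongr
              · norm_num
              · nlinarith
          _ = _ := by rw [Real.rpow_add two0, hC]; ring)
      (by
        intro r hr
        have hx := hXb (n + 2) r hr
        have hk0 : 0 ≤ kk β (n + 1) := by unfold kk; positivity
        rw [abs_mul, abs_mul, abs_of_nonneg hk0]
        have hp := hΦ (n + 1)
        calc |φ (n + 1)| * kk β (n + 1) * |X (n + 2) r|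
            ≤ Φ * kk β (n + 1) * (K * (2 : ℝ) ^ (-s₁ * ((n + 2 : ℕ) : ℝ))) := by gcongr
          _ = Φ * K * (2 : ℝ) ^ (β * ((n + 1 : ℕ) : ℝ) + -s₁ * ((n + 2 : ℕ) : ℝ)) := by
              rw [Real.rpow_add two0]; unfold kk; ring
          _ ≤ Φ * K * 1 := by
              gcongr
              apply Real.rpow_le_one_of_one_le_of_nonpos (by norm_num)
              push_cast
              have : (0 : ℝ) ≤ n := by positivity
              nlinarith
          _ = _ := by ring) t ht
    have h0 : X (n + 1) 0 ^ 2 ≤ (K * (2 : ℝ) ^ (-s₁ * ((n + 1 : ℕ) : ℝ))) ^ 2 := by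
      have := hXb (n + 1) 0 ⟨le_refl 0, hT.le⟩
      rw [← sq_abs]; gcongr
    have q1 : (2 : ℝ) ^ (2 * s₂ * ((n : ℝ) + 1)) * ((2 : ℝ) ^ (-s₁ * ((n + 1 : ℕ) : ℝ))) ^ 2
        = (2 : ℝ) ^ (2 * (s₂ - s₁) * ((n : ℝ) + 1)) := by
      rw [← Real.rpow_natCast, ← Real.rpow_mul two0.le, ← Real.rpow_add two0]
      push_cast
      ring_nf
    have q2 : (2 : ℝ) ^ (2 * s₂ * ((n : ℝ) + 1)) * ((2 : ℝ) ^ ((β - 2 * s₁) * ((n : ℝ) + 1))) ^ 2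
        = (2 : ℝ) ^ ((2 * s₂ + 2 * β - 4 * s₁) * ((n : ℝ) + 1)) := by
      rw [← Real.rpow_natCast, ← Real.rpow_mul two0.le, ← Real.rpow_add two0]
      push_cast
      ring_nf
    rw [← q1, ← q2]
    calc _ ≤ (2 : ℝ) ^ (2 * s₂ * ((n : ℝ) + 1)) * (E * ((K * (2 : ℝ) ^ (-s₁ * ((n + 1 : ℕ) : ℝ))) ^ 2
          * Real.exp (-(2 * (kk β (n + 1) / g (n + 1)) * t))
          + (C * (2 : ℝ) ^ ((β - 2 * s₁) * ((n : ℝ) + 1))) ^ 2 * T)) := by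
          refine mul_le_mul_of_nonneg_left (h.trans ?_) (by positivity)
          gcongr
      _ = _ := by ring
  set S0 := ∑' n : ℕ, (2 : ℝ) ^ ((2 * s₂ + 2 * β - 4 * s₁) * ((n : ℝ) + 1)) with hS0
  have hS00 : 0 ≤ S0 := tsum_nonneg fun n => by positivity
  refine ⟨1 + E * K ^ 2 + E * C ^ 2 * T * S0, fun t ht => ?_⟩
  have ht' : t ∈ Set.Icc 0 T := ⟨ht.1.le, ht.2⟩
  have hs1 := (hsum t ht.1).mul_left (E * K ^ 2)
  have hs2 := hgeo.mul_left (E * C ^ 2 * T)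
  have hsm : Summable (fun n : ℕ => (2 : ℝ) ^ (2 * s₂ * ((n : ℝ) + 1)) * (X (n + 1) t) ^ 2) :=
    Summable.of_nonneg_of_le (fun n => by positivity) (hpt t ht') (hs1.add hs2)
  refine ⟨hsm, ?_⟩
  have hle := hsm.tsum_le_tsum (hpt t ht') (hs1.add hs2)
  rw [hs1.tsum_add hs2, tsum_mul_left, tsum_mul_left, ← hS0] at hle
  have h5 := hF5 t ht.1
  set G := ∑' n : ℕ, (2 : ℝ) ^ (2 * (s₂ - s₁) * ((n : ℝ) + 1)) *
          Real.exp (-(2 * (kk β (n + 1) / g (n + 1)) * t)) with hG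
  have hG0 : 0 ≤ G := tsum_nonneg fun n => by positivity
  set S := ∑' n : ℕ, (2 : ℝ) ^ (2 * s₂ * ((n : ℝ) + 1)) * (X (n + 1) t) ^ 2 with hS
  have hSn : 0 ≤ S := tsum_nonneg fun n => by positivity
  have hsq : Real.sqrt S ≤ 1 + S := by
    rw [Real.sqrt_le_left (by positivity)]; nlinarith
  have hE0 : 0 < E := Real.exp_pos _
  have a1 : 0 ≤ E * K ^ 2 := by positivity
  have a2 : 0 ≤ E * C ^ 2 * T * S0 := by positivity
  have hb : Real.sqrt S ≤ (1 + G) * (1 + E * K ^ 2 + E * C ^ 2 * T * S0) := by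
    nlinarith [mul_nonneg hG0 a2]
  calc F t * Real.sqrt S ≤ F t * ((1 + G) * (1 + E * K ^ 2 + E * C ^ 2 * T * S0)) :=
        mul_le_mul_of_nonneg_left hb (hF4 t ht.1).le
    _ = (F t * (1 + G)) * (1 + E * K ^ 2 + E * C ^ 2 * T * S0) := by ring
    _ ≤ 1 * (1 + E * K ^ 2 + E * C ^ 2 * T * S0) := by gcongr
    _ = _ := one_mul _
end

section
/- Let X = (X_{i,n})_{i∈{1,2,3,4}, n≥1} be a solution of the vector-valued averaged dyadic system with α = γ, and set X_n² := X_{1,n}² + X_{2,n}² + X_{3,n}² + X_{4,n}². Then for every n≥1 and t>0, (1/2) d/dt (X_n²) = −(k_n^α/g_n) X_n² + C₄ ( k_n^γ X_{4,n-1}² X_{1,n} − k_{n+1}^γ X_{4,n}² X_{1,n+1} ); in particular all the terms involving C₁, C₂, C₃, C₅ cancel. -/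
open scoped BigOperators ENNReal
open MeasureTheory Filter Set Topology

/-- For the vector-valued averaged dyadic system with `α = γ`, the energy
`Xₙ² = X₁ₙ² + X₂ₙ² + X₃ₙ² + X₄ₙ²` satisfies
`(1/2)(Xₙ²)' = −(kₙ^α/gₙ)Xₙ² + C₄(kₙ^γ X₄,ₙ₋₁² X₁,ₙ − k_{n+1}^γ X₄,ₙ² X₁,ₙ₊₁)`. -/
theorem averaged_dyadic_energy_identity
    (β : ℝ) (hβ : 0 < β) (g : ℕ → ℝ)
    (hgpos : ∀ n : ℕ, 1 ≤ n → 0 < g n)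
    (α γ : ℝ) (hα : 0 < α) (hγ : 0 < γ) (hαγ : α = γ)
    (C₁ C₂ C₃ C₄ C₅ : ℝ)
    (X1 X2 X3 X4 : ℕ → ℝ → ℝ)
    (h0 : ∀ t : ℝ, X1 0 t = 0 ∧ X2 0 t = 0 ∧ X3 0 t = 0 ∧ X4 0 t = 0)
    (hd1 : ∀ n : ℕ, 1 ≤ n → ∀ t : ℝ, 0 ≤ t →
      HasDerivWithinAt (X1 n)
        (-(kk β n ^ α / g n) * X1 n t
          + kk β n ^ γ * (-C₁ * X3 n t * X4 n t - C₂ * X1 n t * X2 n t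
              - C₃ * X1 n t * X3 n t + C₄ * (X4 (n - 1) t) ^ 2)) (Set.Ici 0) t)
    (hd2 : ∀ n : ℕ, 1 ≤ n → ∀ t : ℝ, 0 ≤ t →
      HasDerivWithinAt (X2 n)
        (-(kk β n ^ α / g n) * X2 n t
          + kk β n ^ γ * (C₂ * (X1 n t) ^ 2 - C₅ * (X3 n t) ^ 2)) (Set.Ici 0) t)
    (hd3 : ∀ n : ℕ, 1 ≤ n → ∀ t : ℝ, 0 ≤ t →
      HasDerivWithinAt (X3 n)
        (-(kk β n ^ α / g n) * X3 n t
          + kk β n ^ γ * (C₃ * (X1 n t) ^ 2 + C₅ * X2 n t * X3 n t)) (Set.Ici 0) t)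
    (hd4 : ∀ n : ℕ, 1 ≤ n → ∀ t : ℝ, 0 ≤ t →
      HasDerivWithinAt (X4 n)
        (-(kk β n ^ α / g n) * X4 n t
          + kk β n ^ γ * C₁ * X1 n t * X3 n t
          - kk β (n + 1) ^ γ * C₄ * X4 n t * X1 (n + 1) t) (Set.Ici 0) t) :
    ∀ n : ℕ, 1 ≤ n → ∀ t : ℝ, 0 < t →
      HasDerivWithinAt
        (fun u : ℝ => (X1 n u) ^ 2 + (X2 n u) ^ 2 + (X3 n u) ^ 2 + (X4 n u) ^ 2)
        (2 * (-(kk β n ^ α / g n)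
            * ((X1 n t) ^ 2 + (X2 n t) ^ 2 + (X3 n t) ^ 2 + (X4 n t) ^ 2)
          + C₄ * (kk β n ^ γ * (X4 (n - 1) t) ^ 2 * X1 n t
              - kk β (n + 1) ^ γ * (X4 n t) ^ 2 * X1 (n + 1) t)))
        (Set.Ici 0) t := by
  intro n hn t ht
  have h := ((((hd1 n hn t ht.le).fun_pow 2).fun_add ((hd2 n hn t ht.le).fun_pow 2)).fun_add
    ((hd3 n hn t ht.le).fun_pow 2)).fun_add ((hd4 n hn t ht.le).fun_pow 2)
  refine h.congr_deriv ?_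
  generalize kk β n ^ α / g n = a
  generalize kk β n ^ γ = b
  generalize kk β (n + 1) ^ γ = c
  push_cast
  ring
end
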